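/- arXiv:2209.14588 — 2 statements merged into one kernel-verified Lean document; each statement's English description precedes it below -/
import Mathlib

section
/- (Main theorem for even cycle lengths, sufficiency.) Let (m, n) be one of the pairs (4,6), (4,8), (4,12), (4,16), (6,12), (8,16), and let v be a positive integer with lcm(m, n) ∣ v. Then for all nonnegative integers r, s with r + s = v − 1, there exists a solution to HWP*(v; m^r, n^s). -/
/-- A solution to the directed Hamilton–Waterloo problem HWP*(v; m^r, n^s):
a family of `r + s` permutations of `Fin v`, the first `r` of which are
fixed-point-free with all cycles of length `m` (i.e. every point has minimal
period `m`), the last `s` fixed-point-free with all cycles of length `n`,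
such that for every ordered pair of distinct vertices `(x, y)` there is exactly
one index `i` with `σ i x = y`. -/
def HWPStarSolution (v m n r s : ℕ) : Prop :=
  ∃ σ : Fin (r + s) → Equiv.Perm (Fin v),
    (∀ i : Fin (r + s), (i : ℕ) < r → ∀ x : Fin v, Function.minimalPeriod ⇑(σ i) x = m) ∧
    (∀ i : Fin (r + s), r ≤ (i : ℕ) → ∀ x : Fin v, Function.minimalPeriod ⇑(σ i) x = n) ∧
    (∀ x y : Fin v, x ≠ y → ∃! i : Fin (r + s), σ i x = y)

/-
Write `v = 2kl` with `w = 2l = lcm(m, n)`, replace every vertex of the complete graph on `2k` points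
by a set of size `l`, and decompose `K_v^*` along the round-robin 1-factorization of the complete
graph. One 1-factor, with the arcs inside the blown-up vertices added, becomes a disjoint union of
copies of `K_w^*`. Every other 1-factor becomes a disjoint union of complete bipartite digraphs with
parts of size `l`. If both parts are copies of a group of order `l`, then sending `x` to `x + i` in
one direction and to `x + (c - i)` in the other gives, for `i` in the group, a decomposition into
2-factors whose squares are translations by `c`, so that all their cycles have length twice the
order of `c`. Such a digraph is thus switchable: it decomposes into `m`-cycle factors as well as
into `n`-cycle factors. When switchable digraphs of degree `d` are added to a digraph of degree at
least `d - 1` that decomposes with every distribution of the factors between the two lengths, the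
sum again has this property. This reduces the problem to `K_w^*`, which is treated by the same
principle from an explicit computer-found decomposition.
-/

open Function

section MinimalPeriod

variable {α β : Type*}

theorem minimalPeriod_apply_of_semiconj_of_injective {e : α → β} (he : Injective e) {f : α → α}
    {g : β → β} (h : Semiconj e f g) (x : α) : minimalPeriod g (e x) = minimalPeriod f x :=
  minimalPeriod_eq_minimalPeriod_iff.2 fun n ↦ by
    rw [IsPeriodicPt, IsFixedPt, ← h.iterate_right n x, he.eq_iff]; rfl

theorem minimalPeriod_eq_of_eqOn {f g : α → α} {s : Set α} (hs : Set.MapsTo f s s)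
    (hfg : Set.EqOn f g s) {x : α} (hx : x ∈ s) : minimalPeriod f x = minimalPeriod g x := by
  have hf : Semiconj Subtype.val (hs.restrict f s s) f := fun _ ↦ rfl
  have hg : Semiconj Subtype.val (hs.restrict f s s) g := fun y ↦ hfg y.2
  exact (minimalPeriod_apply_of_semiconj_of_injective Subtype.val_injective hf ⟨x, hx⟩).trans
    (minimalPeriod_apply_of_semiconj_of_injective Subtype.val_injective hg ⟨x, hx⟩).symm

theorem bijective_of_minimalPeriod_pos {f : α → α} (h : ∀ x, 0 < minimalPeriod f x) :
    Bijective f := by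
  have huniv : periodicPts f = Set.univ :=
    Set.eq_univ_of_forall fun x ↦ minimalPeriod_pos_iff_mem_periodicPts.1 (h x)
  simpa [huniv, Set.bijOn_univ] using bijOn_periodicPts f

theorem minimalPeriod_eq_card_of_isCycleOn {f : Equiv.Perm α} {s : Finset α}
    (hf : f.IsCycleOn s) {x : α} (hx : x ∈ s) : minimalPeriod f x = s.card :=
  Nat.dvd_right_iff_eq.1 fun n ↦ by
    rw [← isPeriodicPt_iff_minimalPeriod_dvd, ← hf.pow_apply_eq hx, IsPeriodicPt, IsFixedPt,
      Equiv.Perm.iterate_eq_pow]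

end MinimalPeriod

theorem disjoint_adj_iff {V : Type*} {D₁ D₂ : V → V → Prop} :
    Disjoint D₁ D₂ ↔ ∀ x y, D₁ x y → ¬D₂ x y := by
  simp only [Pi.disjoint_iff, Prop.disjoint_iff, not_and]

theorem finsetSup_adj_iff {ι V : Type*} {S : Finset ι} {D : ι → V → V → Prop} {x y : V} :
    S.sup D x y ↔ ∃ i ∈ S, D i x y := by
  simp only [Finset.sup_apply, Finset.sup_eq_iSup, iSup_Prop_eq, exists_prop]

section CycleFactorization

variable {ι κ V W : Type*}

/-- The maps `F i` decompose the digraph `D`, given by its adjacency relation, into directed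
2-factors: the factor `F i` consists of the arcs `(x, F i x)`, and all its cycles have
length `ℓ i`. -/
structure IsCycleFactorization (D : V → V → Prop) (ℓ : ι → ℕ) (F : ι → V → V) : Prop where
  minimalPeriod_eq : ∀ i x, minimalPeriod (F i) x = ℓ i
  adj : ∀ i x, D x (F i x)
  existsUnique : ∀ x y, D x y → ∃! i, F i x = y

/-- The disjoint union of copies of the digraph `D`, one for each element of `Q`. -/
def disjointCopies (Q : Type*) (D : V → V → Prop) (p q : Q × V) : Prop :=
  p.1 = q.1 ∧ D p.2 q.2

namespace IsCycleFactorization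

variable {D D₁ D₂ : V → V → Prop} {ℓ : ι → ℕ} {ℓ' : κ → ℕ} {F : ι → V → V} {F' : κ → V → V}

theorem reindex (h : IsCycleFactorization D ℓ F) (e : κ ≃ ι) :
    IsCycleFactorization D (ℓ ∘ e) (F ∘ e) where
  minimalPeriod_eq i := h.minimalPeriod_eq (e i)
  adj i := h.adj (e i)
  existsUnique x y hxy := e.bijective.existsUnique_iff.1 (h.existsUnique x y hxy)

theorem sumElim (h₁ : IsCycleFactorization D₁ ℓ F) (h₂ : IsCycleFactorization D₂ ℓ' F')
    (hD : Disjoint D₁ D₂) :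
    IsCycleFactorization (D₁ ⊔ D₂) (Sum.elim ℓ ℓ') (Sum.elim F F') where
  minimalPeriod_eq := Sum.rec h₁.minimalPeriod_eq h₂.minimalPeriod_eq
  adj := Sum.rec (fun i x ↦ Or.inl (h₁.adj i x)) fun j x ↦ Or.inr (h₂.adj j x)
  existsUnique x y hxy := by
    rw [disjoint_adj_iff] at hD
    rcases hxy with hxy | hxy
    · obtain ⟨i, hi, huniq⟩ := h₁.existsUnique x y hxy
      refine ⟨.inl i, hi, ?_⟩
      rintro (i' | j) h
      · exact congrArg _ (huniq i' h)
      · exact (hD x y hxy (h ▸ h₂.adj j x)).elim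
    · obtain ⟨j, hj, huniq⟩ := h₂.existsUnique x y hxy
      refine ⟨.inr j, hj, ?_⟩
      rintro (i | j') h
      · exact (hD x y (h ▸ h₁.adj i x) hxy).elim
      · exact congrArg _ (huniq j' h)

theorem comap {D : W → W → Prop} {F : ι → W → W} (h : IsCycleFactorization D ℓ F) (e : V ≃ W) :
    IsCycleFactorization (D on e) ℓ fun i x ↦ e.symm (F i (e x)) where
  minimalPeriod_eq i x := by
    rw [← h.minimalPeriod_eq i (e x)]
    exact (minimalPeriod_apply_of_semiconj_of_injective e.injective
      (fun y ↦ e.apply_symm_apply (F i (e y))) x).symm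
  adj i x := by simpa [onFun] using h.adj i (e x)
  existsUnique x y hxy := by simpa only [e.symm_apply_eq] using h.existsUnique _ _ hxy

theorem disjointCopies (h : IsCycleFactorization D ℓ F) (Q : Type*) :
    IsCycleFactorization (disjointCopies Q D) ℓ fun i ↦ Prod.map id (F i) where
  minimalPeriod_eq i p := by
    rw [minimalPeriod_prodMap, minimalPeriod_id, Nat.lcm_one_left, h.minimalPeriod_eq]
  adj i p := ⟨rfl, h.adj i p.2⟩
  existsUnique p q hpq := by
    simpa [Prod.ext_iff, hpq.1] using h.existsUnique _ _ hpq.2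

end IsCycleFactorization

/-- The digraph `D` decomposes into `r` directed 2-factors with all cycles of length `m` and `s`
directed 2-factors with all cycles of length `n`. -/
def HWFactorizable (D : V → V → Prop) (m n r s : ℕ) : Prop :=
  ∃ F : Fin r ⊕ Fin s → V → V,
    IsCycleFactorization D (Sum.elim (fun _ ↦ m) fun _ ↦ n) F

namespace HWFactorizable

variable {D D₁ D₂ : V → V → Prop} {m n r s r₁ s₁ r₂ s₂ : ℕ}

theorem of_equiv {ℓ : ι → ℕ} {F : ι → V → V} (h : IsCycleFactorization D ℓ F)
    (e : Fin r ⊕ Fin s ≃ ι) (hm : ∀ i, ℓ (e (.inl i)) = m) (hn : ∀ j, ℓ (e (.inr j)) = n) :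
    HWFactorizable D m n r s := by
  have hℓ : ℓ ∘ e = Sum.elim (fun _ ↦ m) fun _ ↦ n := funext (Sum.rec hm hn)
  exact ⟨F ∘ e, hℓ ▸ h.reindex e⟩

theorem of_left [Fintype ι] {F : ι → V → V} (h : IsCycleFactorization D (fun _ ↦ m) F) :
    HWFactorizable D m n (Fintype.card ι) 0 :=
  of_equiv h ((Equiv.sumEmpty _ _).trans (Fintype.equivFin ι).symm) (fun _ ↦ rfl) (·.elim0)

theorem of_right [Fintype ι] {F : ι → V → V} (h : IsCycleFactorization D (fun _ ↦ n) F) :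
    HWFactorizable D m n 0 (Fintype.card ι) :=
  of_equiv h ((Equiv.emptySum _ _).trans (Fintype.equivFin ι).symm) (·.elim0) (fun _ ↦ rfl)

theorem sup (h₁ : HWFactorizable D₁ m n r₁ s₁) (h₂ : HWFactorizable D₂ m n r₂ s₂)
    (hD : Disjoint D₁ D₂) : HWFactorizable (D₁ ⊔ D₂) m n (r₁ + r₂) (s₁ + s₂) := by
  obtain ⟨F₁, hF₁⟩ := h₁
  obtain ⟨F₂, hF₂⟩ := h₂
  let e := (Equiv.sumCongr finSumFinEquiv.symm finSumFinEquiv.symm).trans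
    (Equiv.sumSumSumComm (Fin r₁) (Fin r₂) (Fin s₁) (Fin s₂))
  refine of_equiv (hF₁.sumElim hF₂ hD) e (fun i ↦ ?_) fun j ↦ ?_
  · obtain ⟨i | i, rfl⟩ := finSumFinEquiv.surjective i <;> simp [e]
  · obtain ⟨j | j, rfl⟩ := finSumFinEquiv.surjective j <;> simp [e]

theorem comap {D : W → W → Prop} (h : HWFactorizable D m n r s) (e : V ≃ W) :
    HWFactorizable (D on e) m n r s :=
  h.elim fun _ hF ↦ ⟨_, hF.comap e⟩

theorem disjointCopies (h : HWFactorizable D m n r s) (Q : Type*) :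
    HWFactorizable (disjointCopies Q D) m n r s :=
  h.elim fun _ hF ↦ ⟨_, hF.disjointCopies Q⟩

theorem hwpStarSolution {v : ℕ} (h : HWFactorizable (V := Fin v) Ne m n r s) (hm : 0 < m)
    (hn : 0 < n) : HWPStarSolution v m n r s := by
  obtain ⟨F, hF⟩ := h
  have hbij (i) : Bijective (F i) := bijective_of_minimalPeriod_pos fun x ↦ by
    rw [hF.minimalPeriod_eq]
    cases i
    exacts [hm, hn]
  refine ⟨fun i ↦ Equiv.ofBijective _ (hbij (finSumFinEquiv.symm i)), fun i hi x ↦ ?_,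
    fun i hi x ↦ ?_, fun x y hxy ↦ ?_⟩
  · obtain ⟨j, rfl⟩ : ∃ j, i = Fin.castAdd s j := ⟨⟨i, hi⟩, rfl⟩
    simpa using hF.minimalPeriod_eq (.inl j) x
  · obtain ⟨j, rfl⟩ : ∃ j, i = Fin.natAdd r j := ⟨Fin.subNat r (i.cast (add_comm ..)) hi, by simp⟩
    simpa using hF.minimalPeriod_eq (.inr j) x
  · exact finSumFinEquiv.symm.bijective.existsUnique_iff.1 (hF.existsUnique x y hxy)

end HWFactorizable

end CycleFactorization

section Switching

variable {ι V W : Type*}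

/-- For every `r + s = d`, the digraph `D` decomposes into `r` directed 2-factors with all cycles
of length `m` and `s` directed 2-factors with all cycles of length `n`. -/
def FullyHWFactorizable (D : V → V → Prop) (m n d : ℕ) : Prop :=
  ∀ r s, r + s = d → HWFactorizable D m n r s

/-- The digraph `D` decomposes into `d` directed 2-factors with all cycles of length `m`, and also
into `d` directed 2-factors with all cycles of length `n`. -/
def HWSwitchable (D : V → V → Prop) (m n d : ℕ) : Prop :=
  HWFactorizable D m n d 0 ∧ HWFactorizable D m n 0 d

theorem HWSwitchable.comap {D : W → W → Prop} {m n d : ℕ} (h : HWSwitchable D m n d) (e : V ≃ W) :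
    HWSwitchable (D on e) m n d :=
  ⟨h.1.comap e, h.2.comap e⟩

theorem HWSwitchable.disjointCopies {D : V → V → Prop} {m n d : ℕ} (h : HWSwitchable D m n d)
    (Q : Type*) : HWSwitchable (disjointCopies Q D) m n d :=
  ⟨h.1.disjointCopies Q, h.2.disjointCopies Q⟩

namespace FullyHWFactorizable

theorem comap {D : W → W → Prop} {m n d : ℕ} (h : FullyHWFactorizable D m n d) (e : V ≃ W) :
    FullyHWFactorizable (D on e) m n d :=
  fun r s hrs ↦ (h r s hrs).comap e

theorem disjointCopies {D : V → V → Prop} {m n d : ℕ} (h : FullyHWFactorizable D m n d)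
    (Q : Type*) : FullyHWFactorizable (disjointCopies Q D) m n d :=
  fun r s hrs ↦ (h r s hrs).disjointCopies Q

variable {D₀ : V → V → Prop} {m n d₀ d : ℕ}

theorem sup_switchable {D : V → V → Prop} (h₀ : FullyHWFactorizable D₀ m n d₀)
    (h : HWSwitchable D m n d) (hd : d ≤ d₀ + 1) (hD : Disjoint D₀ D) :
    FullyHWFactorizable (D₀ ⊔ D) m n (d₀ + d) := by
  intro r s hrs
  -- Since `r + s ≥ 2 * d - 1`, one of `r` and `s` is at least `d`.
  obtain ⟨r', rfl⟩ | ⟨s', rfl⟩ : (∃ r', r = r' + d) ∨ ∃ s', s = s' + d := by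
    rcases le_or_gt d r with hr | hr
    · exact .inl ⟨r - d, by lia⟩
    · exact .inr ⟨s - d, by lia⟩
  · exact (h₀ r' s (by lia)).sup h.1 hD
  · exact (h₀ r s' (by lia)).sup h.2 hD

theorem sup_finsetSup {D : ι → V → V → Prop} {S : Finset ι} (h₀ : FullyHWFactorizable D₀ m n d₀)
    (h : ∀ i, HWSwitchable (D i) m n d) (hd : d ≤ d₀ + 1) (hD₀ : ∀ i ∈ S, Disjoint D₀ (D i))
    (hD : (S : Set ι).PairwiseDisjoint D) :
    FullyHWFactorizable (D₀ ⊔ S.sup D) m n (d₀ + S.card * d) := by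
  classical
  induction S using Finset.induction_on with
  | empty => simpa using h₀
  | insert i S hi ih =>
    have hdisj : Disjoint (D₀ ⊔ S.sup D) (D i) :=
      disjoint_sup_left.2 ⟨hD₀ i (by simp), Finset.disjoint_sup_left.2 fun j hj ↦
        hD (by simp [hj]) (by simp) (ne_of_mem_of_not_mem hj hi)⟩
    have hS := ih (fun j hj ↦ hD₀ j (by simp [hj])) (hD.subset (by simp))
    convert hS.sup_switchable (h i) (by lia) hdisj using 1
    · rw [Finset.sup_insert, sup_comm (D i), sup_assoc]
    · rw [Finset.card_insert_of_notMem hi]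
      ring

theorem hwpStarSolution {v : ℕ} (h : FullyHWFactorizable (V := Fin v) Ne m n (v - 1)) (hm : 0 < m)
    (hn : 0 < n) {r s : ℕ} (hrs : r + s = v - 1) : HWPStarSolution v m n r s :=
  (h r s hrs).hwpStarSolution hm hn

end FullyHWFactorizable

end Switching

universe u

section OneFactorization

/-- The involutions `τ j` are the 1-factors of a 1-factorization of the complete graph on `P`:
the edges of the `j`-th 1-factor are the pairs `{a, τ j a}`. -/
structure IsOneFactorization {J P : Type*} (τ : J → P → P) : Prop where
  involutive : ∀ j, Involutive (τ j)
  apply_ne : ∀ j a, τ j a ≠ a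
  existsUnique : ∀ a b, a ≠ b → ∃! j, τ j a = b

theorem IsOneFactorization.eq_of_apply_eq {J P : Type*} {τ : J → P → P}
    (hτ : IsOneFactorization τ) {i j : J} {a : P} (h : τ i a = τ j a) : i = j :=
  (hτ.existsUnique a (τ j a) (hτ.apply_ne j a).symm).unique h rfl

/-- The round-robin 1-factors on an abelian group `G` with a point `none` at infinity: `j` is
matched with `none`, and any other `x` with its mirror image `j + j - x` about `j`. -/
def roundRobin {G : Type*} [AddCommGroup G] [DecidableEq G] (j : G) : Option G → Option G
  | none => some j
  | some x => if x = j then none else some (j + j - x)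

theorem isOneFactorization_roundRobin {G : Type*} [AddCommGroup G] [DecidableEq G]
    (hG : Bijective fun x : G ↦ x + x) : IsOneFactorization (roundRobin (G := G)) where
  involutive j
    | none => by simp [roundRobin]
    | some x => by
      by_cases hx : x = j
      · simp [roundRobin, hx]
      · have hx' : j + j - x ≠ j := by
          simpa [add_sub_assoc, sub_eq_zero, eq_comm] using hx
        simp [roundRobin, hx, hx']
  apply_ne j
    | none => by simp [roundRobin]
    | some x => by
      by_cases hx : x = j
      · simp [roundRobin, hx]
      · have hx' : j + j - x ≠ x := fun h ↦ hx (hG.injective (sub_eq_iff_eq_add.1 h)).symm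
        simp [roundRobin, hx, hx']
  existsUnique
    | none, none, h => absurd rfl h
    | none, some y, _ => ⟨y, by simp [roundRobin]⟩
    | some x, none, _ => ⟨x, by simp [roundRobin, eq_comm]⟩
    | some x, some y, h => by
      have hxy : x ≠ y := by simpa using h
      have apply_eq_iff (j : G) : roundRobin j (some x) = some y ↔ j + j = x + y := by
        by_cases hx : x = j
        · simpa [roundRobin, hx] using hx ▸ hxy
        · simp [roundRobin, hx, sub_eq_iff_eq_add, add_comm]
      simpa only [apply_eq_iff] using hG.existsUnique (x + y)

theorem exists_equiv_prod_bool_of_involutive {P : Type u} {τ : P → P} (hτ : Involutive τ)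
    (hne : ∀ a, τ a ≠ a) :
    ∃ (Q : Type u) (e : P ≃ Q × Bool), ∀ a, e (τ a) = ((e a).1, !(e a).2) := by
  classical
  let := linearOrderOfSTO (WellOrderingRel (α := P))
  have lt_iff (a : P) : τ a < a ↔ ¬a < τ a := by
    rw [not_lt, le_iff_lt_or_eq, or_iff_left (hne a)]
  let e : P ≃ {a // a < τ a} × Bool :=
    { toFun a := if h : a < τ a then (⟨a, h⟩, true) else (⟨τ a, by rwa [hτ, lt_iff]⟩, false)
      invFun p := if p.2 then p.1 else τ p.1
      left_inv a := by
        by_cases h : a < τ a <;> simp [h, hτ a]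
      right_inv := by
        rintro ⟨⟨a, ha⟩, _ | _⟩ <;> simp [ha, lt_iff, hτ a] }
  refine ⟨_, e, fun a ↦ ?_⟩
  by_cases h : a < τ a <;> simp [e, h, lt_iff, hτ a]

end OneFactorization

section CompleteBipartite

variable {H : Type*} [AddCommGroup H]

theorem minimalPeriod_add_right (c x : H) : minimalPeriod (· + c) x = addOrderOf c := by
  have h : Semiconj (x + ·) (c + ·) (· + c) := fun y ↦ by simp only; abel
  simpa [addOrderOf] using minimalPeriod_apply_of_semiconj_of_injective (add_right_injective x) h 0

/-- The `i`-th factor of a decomposition of the complete bipartite digraph with parts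
`{true} × H` and `{false} × H`. Its square is the translation by `c`, independently of `i`. -/
def bipartiteFactor (c i : H) : Bool × H → Bool × H
  | (true, x) => (false, x + i)
  | (false, x) => (true, x + (c - i))

theorem iterate_two_bipartiteFactor (c i : H) :
    (bipartiteFactor c i)^[2] = Prod.map id (· + c) := by
  ext1 ⟨_ | _, x⟩ <;> simp [bipartiteFactor, add_assoc]

theorem minimalPeriod_bipartiteFactor (c i : H) (p : Bool × H) :
    minimalPeriod (bipartiteFactor c i) p = 2 * addOrderOf c := by
  have hfst : Semiconj Prod.fst (bipartiteFactor c i) not := by rintro ⟨_ | _, x⟩ <;> rfl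
  have hnot : minimalPeriod not p.1 = 2 :=
    minimalPeriod_eq_prime (Bool.not_not p.1) (by simp [IsFixedPt])
  have heven : 2 ∣ minimalPeriod (bipartiteFactor c i) p :=
    hnot ▸ ((isPeriodicPt_minimalPeriod (bipartiteFactor c i) p).map hfst).minimalPeriod_dvd
  have hsq : minimalPeriod (bipartiteFactor c i)^[2] p = addOrderOf c := by
    rw [iterate_two_bipartiteFactor, minimalPeriod_prodMap, minimalPeriod_id, Nat.lcm_one_left,
      minimalPeriod_add_right]
  rw [minimalPeriod_iterate_eq_div_gcd two_ne_zero, Nat.gcd_eq_right heven] at hsq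
  rw [← hsq, Nat.mul_div_cancel' heven]

theorem isCycleFactorization_bipartiteFactor (c : H) :
    IsCycleFactorization (fun p q : Bool × H ↦ q.1 = !p.1) (fun _ ↦ 2 * addOrderOf c)
      (bipartiteFactor c) where
  minimalPeriod_eq := minimalPeriod_bipartiteFactor c
  adj := by rintro i ⟨_ | _, x⟩ <;> rfl
  existsUnique := by
    rintro ⟨_ | _, x⟩ ⟨_, y⟩ rfl
    · refine ⟨x + c - y, Prod.ext rfl (by simp only [bipartiteFactor]; abel), fun i hi ↦ ?_⟩
      obtain rfl : x + (c - i) = y := congrArg Prod.snd hi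
      abel
    · refine ⟨y - x, by simp [bipartiteFactor], fun i hi ↦ ?_⟩
      obtain rfl : x + i = y := congrArg Prod.snd hi
      abel

theorem hwSwitchable_completeBipartite [Fintype H] (c₁ c₂ : H) :
    HWSwitchable (fun p q : Bool × H ↦ q.1 = !p.1) (2 * addOrderOf c₁) (2 * addOrderOf c₂)
      (Fintype.card H) :=
  ⟨.of_left (isCycleFactorization_bipartiteFactor c₁),
    .of_right (isCycleFactorization_bipartiteFactor c₂)⟩

end CompleteBipartite

section Blowup

variable {J : Type*} {P : Type u} {H : Type*}

/-- The blow-up of the perfect matching `{a, τ a}`: every vertex `a` is replaced by the set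
`{a} × H`, and every edge by a complete bipartite digraph. -/
def matchingBlowup (τ : P → P) (H : Type*) (p q : P × H) : Prop :=
  q.1 = τ p.1

/-- The blow-up of the perfect matching `{a, τ a}` in which every edge is replaced by a complete
digraph on `{a, τ a} × H`. -/
def filledMatchingBlowup (τ : P → P) (H : Type*) (p q : P × H) : Prop :=
  p ≠ q ∧ (q.1 = p.1 ∨ q.1 = τ p.1)

theorem exists_equiv_matchingBlowup {τ : P → P} (hτ : Involutive τ) (hne : ∀ a, τ a ≠ a)
    (H : Type*) :
    ∃ (Q : Type u) (E : P × H ≃ Q × Bool × H),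
      matchingBlowup τ H = (disjointCopies Q (fun p q : Bool × H ↦ q.1 = !p.1) on E) ∧
      filledMatchingBlowup τ H = (disjointCopies Q Ne on E) := by
  obtain ⟨Q, e, he⟩ := exists_equiv_prod_bool_of_involutive hτ hne
  have eq_τ_iff (a b : P) : b = τ a ↔ (e a).1 = (e b).1 ∧ (e b).2 = !(e a).2 := by
    rw [← e.apply_eq_iff_eq, he, Prod.ext_iff, eq_comm (a := (e b).1)]
  have eq_or_eq_τ_iff (a b : P) : b = a ∨ b = τ a ↔ (e a).1 = (e b).1 := by
    rw [← e.apply_eq_iff_eq, eq_τ_iff, Prod.ext_iff, eq_comm (a := (e b).1), ← and_or_left,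
      and_iff_left (Bool.eq_or_eq_not ..)]
  refine ⟨Q, (e.prodCongr (.refl H)).trans (.prodAssoc ..), ?_, ?_⟩ <;> ext ⟨a, x⟩ ⟨b, y⟩
  · exact eq_τ_iff a b
  · simp only [filledMatchingBlowup, eq_or_eq_τ_iff, disjointCopies, onFun, Equiv.trans_apply,
      Equiv.prodCongr_apply, Prod.map, Equiv.prodAssoc_apply, ← e.apply_eq_iff_eq (x := a), Ne,
      Prod.ext_iff, Equiv.refl_apply]
    tauto

theorem hwSwitchable_matchingBlowup [AddCommGroup H] [Fintype H] {τ : P → P} (hτ : Involutive τ)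
    (hne : ∀ a, τ a ≠ a) (c₁ c₂ : H) :
    HWSwitchable (matchingBlowup τ H) (2 * addOrderOf c₁) (2 * addOrderOf c₂)
      (Fintype.card H) := by
  obtain ⟨Q, E, hE, -⟩ := exists_equiv_matchingBlowup hτ hne H
  exact hE ▸ ((hwSwitchable_completeBipartite c₁ c₂).disjointCopies Q).comap E

theorem fullyHWFactorizable_filledMatchingBlowup {τ : P → P} (hτ : Involutive τ)
    (hne : ∀ a, τ a ≠ a) {m n d : ℕ} (h : FullyHWFactorizable (V := Bool × H) Ne m n d) :
    FullyHWFactorizable (filledMatchingBlowup τ H) m n d := by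
  obtain ⟨Q, E, -, hE⟩ := exists_equiv_matchingBlowup hτ hne H
  exact hE ▸ (h.disjointCopies Q).comap E

theorem IsOneFactorization.ne_eq_sup [Fintype J] [DecidableEq J] {τ : J → P → P}
    (hτ : IsOneFactorization τ) (j₀ : J) :
    (Ne : P × H → P × H → Prop) =
      filledMatchingBlowup (τ j₀) H ⊔
        (Finset.univ.erase j₀).sup fun j ↦ matchingBlowup (τ j) H := by
  ext p q
  simp only [Pi.sup_apply, sup_Prop_eq, finsetSup_adj_iff, filledMatchingBlowup, matchingBlowup,
    Finset.mem_erase, Finset.mem_univ, and_true]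
  constructor
  · intro hpq
    by_cases heq : q.1 = p.1
    · exact .inl ⟨hpq, .inl heq⟩
    · obtain ⟨j, hj, -⟩ := hτ.existsUnique _ _ (Ne.symm heq)
      by_cases hj₀ : j = j₀
      · exact .inl ⟨hpq, .inr (hj₀ ▸ hj.symm)⟩
      · exact .inr ⟨j, hj₀, hj.symm⟩
  · rintro (⟨hpq, -⟩ | ⟨j, -, hj⟩)
    · exact hpq
    · rintro rfl
      exact hτ.apply_ne j p.1 hj.symm

theorem FullyHWFactorizable.blowup [Fintype J] [AddCommGroup H] [Fintype H] {τ : J → P → P}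
    (hτ : IsOneFactorization τ) (j₀ : J) (c₁ c₂ : H) {d : ℕ} (hd : Fintype.card H ≤ d + 1)
    (h : FullyHWFactorizable (V := Bool × H) Ne (2 * addOrderOf c₁) (2 * addOrderOf c₂) d) :
    FullyHWFactorizable (V := P × H) Ne (2 * addOrderOf c₁) (2 * addOrderOf c₂)
      (d + (Fintype.card J - 1) * Fintype.card H) := by
  classical
  rw [hτ.ne_eq_sup j₀, ← Finset.card_univ, ← Finset.card_erase_of_mem (Finset.mem_univ j₀)]
  have hfilled := fullyHWFactorizable_filledMatchingBlowup (hτ.involutive j₀) (hτ.apply_ne j₀) h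
  refine hfilled.sup_finsetSup
    (fun j ↦ hwSwitchable_matchingBlowup (hτ.involutive j) (hτ.apply_ne j) c₁ c₂) hd ?_ ?_
  · refine fun j hj ↦ disjoint_adj_iff.2 ?_
    rintro p q ⟨-, h | h⟩ h'
    · exact hτ.apply_ne j p.1 (h'.symm.trans h)
    · exact Finset.ne_of_mem_erase hj (hτ.eq_of_apply_eq (h'.symm.trans h))
  · exact fun i _ j _ hij ↦ disjoint_adj_iff.2 fun p q h h' ↦
      hij (hτ.eq_of_apply_eq (h.symm.trans h'))

theorem FullyHWFactorizable.ne_of_equiv {V W : Type*} {m n d : ℕ}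
    (h : FullyHWFactorizable (V := W) Ne m n d) (e : V ≃ W) :
    FullyHWFactorizable (V := V) Ne m n d := by
  have hne : (Ne on e) = Ne := by ext; exact e.apply_eq_iff_eq.not
  exact hne ▸ h.comap e

theorem bijective_add_self_of_odd_card {G : Type*} [AddCommGroup G] (hG : Odd (Nat.card G)) :
    Bijective fun x : G ↦ x + x := by
  simpa only [two_nsmul] using hG.coprime_two_right.nsmul_right_bijective

theorem exists_addOrderOf_eq_of_dvd {a h : ℕ} (hh : h ≠ 0) (ha : a ∣ h) :
    ∃ c : ZMod h, addOrderOf c = a := by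
  obtain ⟨b, rfl⟩ := ha
  refine ⟨(b : ℕ), ?_⟩
  rw [ZMod.addOrderOf_coe _ hh, Nat.gcd_mul_left_left,
    Nat.mul_div_cancel _ (Nat.pos_of_ne_zero (right_ne_zero_of_mul hh))]

theorem FullyHWFactorizable.of_dvd {m n v w : ℕ} (hm : Even m) (hn : Even n) (hmw : m ∣ w)
    (hnw : n ∣ w) (h : FullyHWFactorizable (V := Fin w) Ne m n (w - 1)) (hv : 0 < v)
    (hwv : w ∣ v) : FullyHWFactorizable (V := Fin v) Ne m n (v - 1) := by
  obtain ⟨a, rfl⟩ := hm.two_dvd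
  obtain ⟨b, rfl⟩ := hn.two_dvd
  obtain ⟨l, rfl⟩ : 2 ∣ w := (dvd_mul_right 2 a).trans hmw
  obtain ⟨k, rfl⟩ := hwv
  have hl : 0 < l := by by_contra! hl; simp_all
  obtain ⟨k, rfl⟩ : ∃ k', k = k' + 1 := Nat.exists_eq_add_one.2 (Nat.pos_of_mul_pos_left hv)
  have : NeZero l := ⟨hl.ne'⟩
  obtain ⟨c₁, rfl⟩ := exists_addOrderOf_eq_of_dvd hl.ne' (Nat.dvd_of_mul_dvd_mul_left two_pos hmw)
  obtain ⟨c₂, rfl⟩ := exists_addOrderOf_eq_of_dvd hl.ne' (Nat.dvd_of_mul_dvd_mul_left two_pos hnw)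
  have hround : IsOneFactorization (roundRobin (G := ZMod (2 * k + 1))) :=
    isOneFactorization_roundRobin (bijective_add_self_of_odd_card (by simp))
  have hbase := h.ne_of_equiv (V := Bool × ZMod l) (Fintype.equivOfCardEq (by simp))
  have hblowup := hbase.blowup hround 0 c₁ c₂ (by rw [ZMod.card]; lia)
  have hcard : Fintype.card (Fin (2 * l * (k + 1))) =
      Fintype.card (Option (ZMod (2 * k + 1)) × ZMod l) := by
    simp only [Fintype.card_fin, Fintype.card_prod, Fintype.card_option, ZMod.card]
    ring
  have hdeg : 2 * l - 1 + (Fintype.card (ZMod (2 * k + 1)) - 1) * Fintype.card (ZMod l) =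
      2 * l * (k + 1) - 1 := by
    rw [ZMod.card, ZMod.card, Nat.add_sub_cancel, ← Nat.sub_add_comm (by lia)]
    ring_nf
  exact hdeg ▸ hblowup.ne_of_equiv (Fintype.equivOfCardEq hcard)

end Blowup

section CycleTables

variable {V : Type*} [DecidableEq V]

/-- The permutation given by a list of cycles. The cycles multiply without further conditions, but
are meant to be disjoint. -/
def cyclesPerm (C : List (List V)) : Equiv.Perm V :=
  (C.map List.formPerm).prod

theorem cyclesPerm_apply_of_notMem {C : List (List V)} {x : V} (hx : ∀ c ∈ C, x ∉ c) :
    cyclesPerm C x = x := by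
  induction C with
  | nil => rfl
  | cons c C ih =>
    rw [List.forall_mem_cons] at hx
    change c.formPerm (cyclesPerm C x) = x
    rw [ih hx.2, List.formPerm_apply_of_notMem hx.1]

theorem cyclesPerm_apply_of_mem {C : List (List V)} (hC : C.Pairwise List.Disjoint) {c : List V}
    (hc : c ∈ C) {x : V} (hx : x ∈ c) : cyclesPerm C x = c.formPerm x := by
  induction C with
  | nil => simp at hc
  | cons c' C ih =>
    rw [List.pairwise_cons] at hC
    change c'.formPerm (cyclesPerm C x) = c.formPerm x
    rcases List.mem_cons.1 hc with rfl | hc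
    · rw [cyclesPerm_apply_of_notMem fun c' hc' ↦ hC.1 c' hc' hx]
    · rw [ih hC.2 hc, List.formPerm_apply_of_notMem]
      exact fun h ↦ hC.1 c hc h (List.formPerm_apply_mem_of_mem hx)

/-- The cycles in `C` have length `ℓ` and partition `V`. -/
def IsUniformCycleList (ℓ : ℕ) (C : List (List V)) : Prop :=
  (∀ c ∈ C, c.length = ℓ) ∧ C.flatten.Nodup ∧ ∀ x, x ∈ C.flatten

theorem IsUniformCycleList.minimalPeriod_cyclesPerm {ℓ : ℕ} {C : List (List V)}
    (hC : IsUniformCycleList ℓ C) (x : V) : minimalPeriod (cyclesPerm C) x = ℓ := by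
  obtain ⟨hlen, hnodup, hcover⟩ := hC
  obtain ⟨hnodup, hdisj⟩ := List.nodup_flatten.1 hnodup
  obtain ⟨c, hc, hx⟩ := List.mem_flatten.1 (hcover x)
  have heqOn : Set.EqOn (cyclesPerm C) c.formPerm {y | y ∈ c} :=
    fun y hy ↦ cyclesPerm_apply_of_mem hdisj hc hy
  have hmaps : Set.MapsTo (cyclesPerm C) {y | y ∈ c} {y | y ∈ c} :=
    fun y hy ↦ heqOn hy ▸ List.formPerm_apply_mem_of_mem hy
  have hcycle : c.formPerm.IsCycleOn (c.toFinset : Set V) := by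
    simpa using (hnodup c hc).isCycleOn_formPerm
  rw [minimalPeriod_eq_of_eqOn hmaps heqOn hx,
    minimalPeriod_eq_card_of_isCycleOn hcycle (List.mem_toFinset.2 hx),
    List.toFinset_card_of_nodup (hnodup c hc), hlen c hc]

/-- The factors listed in `M` followed by those listed in `N`, each given by its cycles. -/
def tableFactor (M N : List (List (List V))) : Fin M.length ⊕ Fin N.length → V → V :=
  Sum.elim (fun i ↦ cyclesPerm M[i]) fun j ↦ cyclesPerm N[j]

/-- The digraph `D` decomposes into the directed 2-factors listed in `M`, with all cycles of length
`m`, and those listed in `N`, with all cycles of length `n`. -/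
def IsFactorizationTable (D : V → V → Prop) (m n : ℕ) (M N : List (List (List V))) : Prop :=
  ((∀ C ∈ M, IsUniformCycleList m C) ∧ ∀ C ∈ N, IsUniformCycleList n C) ∧
    (∀ x i, D x (tableFactor M N i x)) ∧
    (∀ x, Injective fun i ↦ tableFactor M N i x) ∧
    ∀ x y, D x y → ∃ i, tableFactor M N i x = y

instance [Fintype V] (D : V → V → Prop) [DecidableRel D] (m n : ℕ) (M N : List (List (List V))) :
    Decidable (IsFactorizationTable D m n M N) := by
  unfold IsFactorizationTable IsUniformCycleList
  infer_instance

theorem IsFactorizationTable.hwFactorizable {D : V → V → Prop} {m n : ℕ}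
    {M N : List (List (List V))} (h : IsFactorizationTable D m n M N) :
    HWFactorizable D m n M.length N.length := by
  obtain ⟨⟨hM, hN⟩, hadj, hinj, hsurj⟩ := h
  refine ⟨tableFactor M N, ?_, fun i x ↦ hadj x i, fun x y hxy ↦ ?_⟩
  · rintro (i | j) x
    · exact (hM _ (List.getElem_mem i.2)).minimalPeriod_cyclesPerm x
    · exact (hN _ (List.getElem_mem j.2)).minimalPeriod_cyclesPerm x
  · obtain ⟨i, hi⟩ := hsurj x y hxy
    exact ⟨i, hi, fun j hj ↦ hinj x (hj.trans hi.symm)⟩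

end CycleTables

section SwitchingTables

variable {V : Type*} [AddGroup V]

/-- Data decomposing the complete digraph on `V` into translates of a switchable digraph and a
fully factorizable rest: `left` and `right` are two factorizations of the switchable digraph,
which is translated by the elements of `shifts`, and `rest` lists factorizations of the rest, the
factors with the first cycle length being separated from those with the second. -/
structure SwitchingTable (V : Type*) where
  rest : List (List (List (List V)) × List (List (List V)))
  left : List (List (List V))
  right : List (List (List V))
  shifts : Finset V

namespace SwitchingTable

variable [DecidableEq V]

/-- The switchable digraph of a table. -/
def SwitchAdj (T : SwitchingTable V) (x y : V) : Prop :=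
  ∃ C ∈ T.left, cyclesPerm C x = y

/-- The arcs of the complete digraph outside the translates of the switchable digraph. -/
def RestAdj (T : SwitchingTable V) (x y : V) : Prop :=
  x ≠ y ∧ ∀ a ∈ T.shifts, ¬T.SwitchAdj (x - a) (y - a)

/-- The table `T` is correct for the cycle lengths `m` and `n`, with a rest of degree `d₀` and a
switchable digraph of degree `d`. -/
structure IsValid (T : SwitchingTable V) (m n d₀ d : ℕ) : Prop where
  degree_le : d ≤ d₀ + 1
  map_length_rest :
    (T.rest.map fun R ↦ (R.1.length, R.2.length)) = List.Nat.antidiagonal d₀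
  length_left : T.left.length = d
  length_right : T.right.length = d
  rest : ∀ R ∈ T.rest, IsFactorizationTable T.RestAdj m n R.1 R.2
  left : IsFactorizationTable T.SwitchAdj m n T.left []
  right : IsFactorizationTable T.SwitchAdj m n [] T.right
  irrefl : ∀ x, ¬T.SwitchAdj x x
  disjoint : ∀ a ∈ T.shifts, ∀ b ∈ T.shifts, a ≠ b →
    ∀ x y, T.SwitchAdj (x - a) (y - a) → ¬T.SwitchAdj (x - b) (y - b)

variable {T : SwitchingTable V} {m n d₀ d : ℕ}

theorem IsValid.fullyHWFactorizable_restAdj (hT : T.IsValid m n d₀ d) :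
    FullyHWFactorizable T.RestAdj m n d₀ := by
  intro r s hrs
  have hmem : (r, s) ∈ List.Nat.antidiagonal d₀ := List.Nat.mem_antidiagonal.2 hrs
  rw [← hT.map_length_rest, List.mem_map] at hmem
  obtain ⟨R, hR, hRrs⟩ := hmem
  obtain ⟨rfl, rfl⟩ := Prod.mk.inj hRrs
  exact (hT.rest R hR).hwFactorizable

theorem IsValid.hwSwitchable_switchAdj (hT : T.IsValid m n d₀ d) :
    HWSwitchable T.SwitchAdj m n d :=
  ⟨hT.length_left ▸ hT.left.hwFactorizable, hT.length_right ▸ hT.right.hwFactorizable⟩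

theorem IsValid.ne_eq_sup (hT : T.IsValid m n d₀ d) :
    Ne = T.RestAdj ⊔ T.shifts.sup fun a ↦ T.SwitchAdj on Equiv.subRight a := by
  ext x y
  simp only [Pi.sup_apply, sup_Prop_eq, finsetSup_adj_iff, onFun, Equiv.subRight_apply, RestAdj]
  constructor
  · intro hxy
    by_cases h : ∃ a ∈ T.shifts, T.SwitchAdj (x - a) (y - a)
    · exact .inr h
    · exact .inl ⟨hxy, by simpa using h⟩
  · rintro (⟨hxy, -⟩ | ⟨a, -, ha⟩)
    · exact hxy
    · rintro rfl
      exact hT.irrefl _ ha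

theorem IsValid.fullyHWFactorizable (hT : T.IsValid m n d₀ d) :
    FullyHWFactorizable (V := V) Ne m n (d₀ + T.shifts.card * d) := by
  rw [hT.ne_eq_sup]
  refine hT.fullyHWFactorizable_restAdj.sup_finsetSup
    (fun a ↦ hT.hwSwitchable_switchAdj.comap (Equiv.subRight a)) hT.degree_le ?_ ?_
  · exact fun a ha ↦ disjoint_adj_iff.2 fun x y h ↦ h.2 a ha
  · exact fun a ha b hb hab ↦ disjoint_adj_iff.2 (hT.disjoint a ha b hb hab)

instance : DecidableRel T.SwitchAdj :=
  fun x y ↦ inferInstanceAs (Decidable (∃ C ∈ T.left, cyclesPerm C x = y))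

instance : DecidableRel T.RestAdj :=
  fun x y ↦ inferInstanceAs (Decidable (x ≠ y ∧ ∀ a ∈ T.shifts, ¬T.SwitchAdj (x - a) (y - a)))

end SwitchingTable

end SwitchingTables

section BaseCases

/-- A switching table of order 12 for cycle lengths 4 and 6, found by computer search. -/
def switchingTableFourSix : SwitchingTable (Fin 12) where
  rest :=
    [([],
      [[[0, 9, 6, 4, 8, 1], [2, 11, 3, 5, 10, 7]],
       [[0, 4, 11, 1, 6, 2], [3, 8, 9, 5, 7, 10]],
       [[0, 7, 9, 2, 10, 8], [1, 3, 6, 11, 4, 5]],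
       [[0, 5, 2, 7, 11, 6], [1, 9, 8, 3, 10, 4]],
       [[0, 1, 10, 6, 3, 7], [2, 8, 5, 4, 9, 11]]]),
     ([[[0, 1, 9, 8], [2, 10, 4, 5], [3, 7, 11, 6]]],
      [[[0, 7, 10, 3, 5, 1], [2, 11, 4, 8, 9, 6]],
       [[0, 4, 1, 3, 10, 6], [2, 8, 5, 7, 9, 11]],
       [[0, 5, 4, 9, 2, 7], [1, 10, 8, 3, 6, 11]],
       [[0, 9, 5, 10, 7, 2], [1, 6, 4, 11, 3, 8]]]),
     ([[[0, 9, 6, 2], [1, 10, 3, 8], [4, 5, 7, 11]],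
       [[0, 1, 3, 7], [2, 10, 6, 11], [4, 8, 9, 5]]],
      [[[0, 4, 1, 9, 11, 6], [2, 8, 3, 5, 10, 7]],
       [[0, 5, 2, 7, 9, 8], [1, 6, 3, 10, 4, 11]],
       [[0, 7, 10, 8, 5, 1], [2, 11, 3, 6, 4, 9]]]),
     ([[[0, 7, 2, 8], [1, 9, 5, 4], [3, 10, 6, 11]],
       [[0, 5, 1, 6], [2, 10, 4, 11], [3, 7, 9, 8]],
       [[0, 1, 10, 7], [2, 11, 4, 5], [3, 8, 9, 6]]],
      [[[0, 4, 9, 11, 6, 2], [1, 3, 5, 7, 10, 8]],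
       [[0, 9, 2, 7, 11, 1], [3, 6, 4, 8, 5, 10]]]),
     ([[[0, 7, 2, 8], [1, 10, 3, 5], [4, 9, 11, 6]],
       [[0, 4, 11, 2], [1, 6, 3, 8], [5, 10, 7, 9]],
       [[0, 5, 2, 7], [1, 9, 6, 11], [3, 10, 4, 8]],
       [[0, 1, 3, 6], [2, 10, 8, 9], [4, 5, 7, 11]]],
      [[[0, 9, 8, 5, 4, 1], [2, 11, 3, 7, 10, 6]]]),
     ([[[0, 9, 2, 7], [1, 6, 11, 4], [3, 8, 5, 10]],
       [[0, 7, 9, 8], [1, 10, 4, 5], [2, 11, 3, 6]],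
       [[0, 5, 7, 2], [1, 3, 10, 8], [4, 9, 11, 6]],
       [[0, 4, 11, 1], [2, 8, 9, 5], [3, 7, 10, 6]],
       [[0, 1, 9, 6], [2, 10, 7, 11], [3, 5, 4, 8]]],
      [])]
  left :=
    [[[0, 3, 4, 10], [1, 2, 9, 7], [5, 11, 8, 6]],
     [[0, 8, 7, 5], [1, 4, 6, 9], [2, 3, 11, 10]]]
  right :=
    [[[0, 3, 11, 8, 6, 5], [1, 4, 10, 2, 9, 7]],
     [[0, 8, 7, 5, 11, 10], [1, 2, 3, 4, 6, 9]]]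
  shifts := {0, 4, 8}

theorem isValid_switchingTableFourSix : switchingTableFourSix.IsValid 4 6 5 2 := by
  constructor <;> decide +kernel

/-- A switching table of order 8 for cycle lengths 4 and 8, found by computer search. -/
def switchingTableFourEight : SwitchingTable (Fin 8) where
  rest :=
    [([],
      [[[0, 7, 5, 6, 3, 4, 2, 1]],
       [[0, 4, 5, 1, 6, 7, 2, 3]],
       [[0, 2, 6, 4, 1, 5, 3, 7]]]),
     ([[[0, 2, 3, 7], [1, 5, 6, 4]]], [[[0, 7, 2, 6, 3, 4, 5, 1]], [[0, 4, 2, 1, 6, 7, 5, 3]]]),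
     ([[[0, 7, 2, 1], [3, 4, 5, 6]], [[0, 4, 2, 3], [1, 6, 7, 5]]], [[[0, 2, 6, 4, 1, 5, 3, 7]]]),
     ([[[0, 4, 5, 3], [1, 6, 7, 2]],
       [[0, 2, 3, 7], [1, 5, 6, 4]],
       [[0, 7, 5, 1], [2, 6, 3, 4]]],
      [])]
  left :=
    [[[0, 3, 5, 2], [1, 4, 7, 6]],
     [[0, 6, 2, 5], [1, 7, 4, 3]],
     [[0, 1, 2, 4], [3, 6, 5, 7]],
     [[0, 5, 4, 6], [1, 3, 2, 7]]]
  right :=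
    [[[0, 3, 1, 4, 7, 6, 5, 2]],
     [[0, 6, 1, 7, 4, 3, 2, 5]],
     [[0, 1, 2, 7, 3, 5, 4, 6]],
     [[0, 5, 7, 1, 3, 6, 2, 4]]]
  shifts := {0}

theorem isValid_switchingTableFourEight : switchingTableFourEight.IsValid 4 8 3 4 := by
  constructor <;> decide +kernel

/-- A switching table of order 12 for cycle lengths 4 and 12, found by computer search. -/
def switchingTableFourTwelve : SwitchingTable (Fin 12) where
  rest :=
    [([],
      [[[0, 11, 1, 6, 9, 7, 8, 2, 5, 10, 3, 4]],
       [[0, 8, 7, 1, 2, 9, 10, 4, 3, 11, 5, 6]],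
       [[0, 2, 1, 4, 6, 11, 7, 3, 5, 8, 10, 9]],
       [[0, 6, 5, 3, 2, 7, 9, 8, 4, 10, 1, 11]],
       [[0, 3, 9, 2, 8, 11, 10, 5, 4, 7, 6, 1]]]),
     ([[[0, 2, 8, 11], [1, 6, 9, 7], [3, 4, 10, 5]]],
      [[[0, 8, 7, 9, 10, 4, 3, 2, 1, 11, 5, 6]],
       [[0, 3, 9, 2, 5, 4, 6, 11, 7, 8, 10, 1]],
       [[0, 6, 5, 10, 9, 8, 2, 7, 3, 11, 1, 4]],
       [[0, 11, 10, 3, 5, 8, 4, 7, 6, 1, 2, 9]]]),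
     ([[[0, 2, 8, 11], [1, 6, 9, 7], [3, 4, 10, 5]],
       [[0, 8, 10, 9], [1, 11, 7, 6], [2, 5, 4, 3]]],
      [[[0, 3, 11, 10, 4, 6, 5, 8, 7, 9, 2, 1]],
       [[0, 11, 1, 4, 7, 8, 2, 9, 10, 3, 5, 6]],
       [[0, 6, 11, 5, 10, 1, 2, 7, 3, 9, 8, 4]]]),
     ([[[0, 2, 8, 11], [1, 6, 9, 7], [3, 4, 10, 5]],
       [[0, 8, 4, 6], [1, 11, 5, 10], [2, 7, 3, 9]],
       [[0, 11, 1, 4], [2, 9, 10, 3], [5, 8, 7, 6]]],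
      [[[0, 6, 1, 2, 5, 4, 3, 11, 7, 8, 10, 9]],
       [[0, 3, 5, 6, 11, 10, 4, 7, 9, 8, 2, 1]]]),
     ([[[0, 8, 10, 1], [2, 7, 3, 9], [4, 6, 11, 5]],
       [[0, 3, 5, 6], [1, 2, 8, 11], [4, 7, 9, 10]],
       [[0, 6, 1, 11], [2, 9, 7, 8], [3, 4, 10, 5]],
       [[0, 11, 10, 9], [1, 4, 3, 2], [5, 8, 7, 6]]],
      [[[0, 2, 5, 10, 3, 11, 7, 1, 6, 9, 8, 4]]]),
     ([[[0, 8, 2, 9], [1, 6, 11, 10], [3, 5, 4, 7]],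
       [[0, 3, 11, 1], [2, 7, 6, 9], [4, 10, 5, 8]],
       [[0, 6, 1, 4], [2, 5, 10, 3], [7, 9, 8, 11]],
       [[0, 11, 5, 6], [1, 2, 8, 7], [3, 9, 10, 4]],
       [[0, 2, 1, 11], [3, 4, 6, 5], [7, 8, 10, 9]]],
      [])]
  left :=
    [[[0, 10, 7, 5], [1, 3, 8, 9], [2, 4, 11, 6]],
     [[0, 4, 9, 3], [1, 10, 8, 5], [2, 6, 7, 11]]]
  right :=
    [[[0, 10, 7, 11, 6, 2, 4, 9, 1, 3, 8, 5]], [[0, 4, 11, 2, 6, 7, 5, 1, 10, 8, 9, 3]]]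
  shifts := {0, 4, 8}

theorem isValid_switchingTableFourTwelve : switchingTableFourTwelve.IsValid 4 12 5 2 := by
  constructor <;> decide +kernel

/-- A switching table of order 16 for cycle lengths 4 and 16, found by computer search. -/
def switchingTableFourSixteen : SwitchingTable (Fin 16) where
  rest :=
    [([],
      [[[0, 13, 6, 10, 9, 2, 1, 7, 11, 4, 8, 5, 14, 15, 3, 12]],
       [[0, 4, 1, 10, 14, 2, 6, 5, 11, 15, 8, 12, 9, 13, 3, 7]],
       [[0, 6, 7, 12, 2, 3, 8, 14, 13, 1, 5, 9, 15, 4, 10, 11]]]),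
     ([[[0, 13, 6, 7], [1, 10, 11, 4], [2, 3, 12, 9], [5, 14, 15, 8]]],
      [[[0, 4, 10, 9, 15, 3, 8, 14, 13, 1, 7, 12, 2, 6, 5, 11]],
       [[0, 6, 10, 14, 2, 1, 5, 9, 13, 3, 7, 11, 15, 4, 8, 12]]]),
     ([[[0, 13, 3, 12], [1, 7, 11, 4], [2, 6, 10, 14], [5, 9, 15, 8]],
       [[0, 6, 5, 11], [1, 10, 9, 13], [2, 3, 7, 12], [4, 8, 14, 15]]],
      [[[0, 4, 10, 11, 15, 3, 8, 12, 9, 2, 1, 5, 14, 13, 6, 7]]]),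
     ([[[0, 13, 6, 7], [1, 10, 11, 4], [2, 3, 12, 9], [5, 14, 15, 8]],
       [[0, 4, 8, 12], [1, 5, 9, 13], [2, 6, 10, 14], [3, 7, 11, 15]],
       [[0, 6, 5, 11], [1, 7, 12, 2], [3, 8, 14, 13], [4, 10, 9, 15]]],
      [])]
  left :=
    [[[0, 8, 1, 14], [2, 15, 13, 4], [3, 5, 7, 10], [6, 9, 12, 11]],
     [[0, 7, 6, 1], [2, 8, 3, 11], [4, 9, 14, 10], [5, 15, 12, 13]],
     [[0, 2, 10, 15], [1, 12, 8, 11], [3, 13, 9, 7], [4, 14, 5, 6]]]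
  right :=
    [[[0, 8, 3, 13, 5, 15, 12, 11, 2, 10, 4, 9, 7, 6, 1, 14]],
     [[0, 7, 3, 5, 6, 4, 2, 8, 11, 1, 12, 13, 9, 14, 10, 15]],
     [[0, 2, 15, 13, 4, 14, 5, 7, 10, 3, 11, 6, 9, 12, 8, 1]]]
  shifts := {0, 4, 8, 12}

theorem isValid_switchingTableFourSixteen : switchingTableFourSixteen.IsValid 4 16 3 3 := by
  constructor <;> decide +kernel

/-- A switching table of order 12 for cycle lengths 6 and 12, found by computer search. -/
def switchingTableSixTwelve : SwitchingTable (Fin 12) where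
  rest :=
    [([],
      [[[0, 9, 6, 8, 5, 2, 10, 4, 11, 7, 1, 3]],
       [[0, 7, 2, 11, 3, 10, 5, 9, 4, 6, 1, 8]],
       [[0, 2, 6, 3, 5, 1, 7, 9, 11, 8, 4, 10]]]),
     ([[[0, 9, 11, 7, 1, 3], [2, 10, 4, 6, 8, 5]]],
      [[[0, 7, 2, 11, 3, 5, 9, 6, 1, 8, 4, 10]],
       [[0, 2, 6, 3, 10, 5, 1, 7, 9, 4, 11, 8]]]),
     ([[[0, 9, 4, 6, 3, 10], [1, 8, 5, 2, 11, 7]],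
       [[0, 7, 2, 6, 1, 3], [4, 10, 5, 9, 11, 8]]],
      [[[0, 2, 10, 4, 11, 3, 5, 1, 7, 9, 6, 8]]]),
     ([[[0, 9, 11, 7, 1, 3], [2, 10, 4, 6, 8, 5]],
       [[0, 7, 2, 6, 1, 8], [3, 10, 5, 9, 4, 11]],
       [[0, 2, 11, 8, 4, 10], [1, 7, 9, 6, 3, 5]]],
      [])]
  left :=
    [[[0, 11, 5, 3, 7, 4], [1, 6, 2, 9, 10, 8]],
     [[0, 3, 9, 7, 6, 11], [1, 4, 5, 8, 10, 2]]]
  right :=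
    [[[0, 11, 5, 3, 7, 6, 2, 9, 10, 8, 1, 4]], [[0, 3, 9, 7, 4, 5, 8, 10, 2, 1, 6, 11]]]
  shifts := {0, 3, 6, 9}

theorem isValid_switchingTableSixTwelve : switchingTableSixTwelve.IsValid 6 12 3 2 := by
  constructor <;> decide +kernel

/-- A switching table of order 16 for cycle lengths 8 and 16, found by computer search. -/
def switchingTableEightSixteen : SwitchingTable (Fin 16) where
  rest :=
    [([],
      [[[0, 7, 8, 3, 4, 11, 12, 10, 1, 6, 13, 2, 9, 14, 5, 15]],
       [[0, 11, 8, 6, 1, 10, 5, 14, 9, 2, 13, 7, 4, 15, 12, 3]],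
       [[0, 14, 12, 7, 1, 11, 5, 10, 8, 15, 9, 3, 13, 6, 4, 2]]]),
     ([[[0, 7, 4, 11, 8, 15, 12, 3], [1, 6, 13, 2, 9, 14, 5, 10]]],
      [[[0, 11, 5, 14, 12, 7, 1, 10, 8, 3, 13, 6, 4, 15, 9, 2]],
       [[0, 14, 9, 3, 4, 2, 13, 7, 8, 6, 1, 11, 12, 10, 5, 15]]]),
     ([[[0, 7, 8, 3, 4, 11, 5, 15], [1, 6, 13, 2, 9, 14, 12, 10]],
       [[0, 11, 8, 6, 4, 15, 12, 3], [1, 10, 5, 14, 9, 2, 13, 7]]],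
      [[[0, 14, 5, 10, 8, 15, 9, 3, 13, 6, 1, 11, 12, 7, 4, 2]]]),
     ([[[0, 7, 4, 11, 8, 15, 12, 3], [1, 6, 13, 2, 9, 14, 5, 10]],
       [[0, 11, 12, 7, 8, 3, 4, 15], [1, 10, 5, 14, 9, 2, 13, 6]],
       [[0, 14, 12, 10, 8, 6, 4, 2], [1, 11, 5, 15, 9, 3, 13, 7]]],
      [])]
  left :=
    [[[0, 3, 11, 14, 4, 10, 7, 6], [1, 5, 12, 9, 15, 13, 8, 2]],
     [[0, 1, 3, 9, 5, 2, 7, 14], [4, 12, 8, 10, 13, 11, 6, 15]],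
     [[0, 15, 3, 12, 5, 4, 8, 13], [1, 2, 14, 6, 10, 11, 7, 9]]]
  right :=
    [[[0, 3, 9, 1, 5, 12, 8, 2, 7, 6, 15, 4, 10, 13, 11, 14]],
     [[0, 1, 2, 14, 6, 10, 11, 7, 9, 15, 3, 12, 5, 4, 8, 13]],
     [[0, 15, 13, 8, 10, 7, 14, 4, 12, 9, 5, 2, 1, 3, 11, 6]]]
  shifts := {0, 4, 8, 12}

theorem isValid_switchingTableEightSixteen : switchingTableEightSixteen.IsValid 8 16 3 3 := by
  constructor <;> decide +kernel

end BaseCases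

/-- Main theorem for even cycle lengths (sufficiency): for
(m, n) ∈ {(4,6), (4,8), (4,12), (4,16), (6,12), (8,16)} and lcm(m, n) ∣ v,
HWP*(v; m^r, n^s) has a solution whenever r + s = v - 1. -/
theorem hwpStar_even_main (m n v : ℕ)
    (hmn : (m, n) = (4, 6) ∨ (m, n) = (4, 8) ∨ (m, n) = (4, 12) ∨
      (m, n) = (4, 16) ∨ (m, n) = (6, 12) ∨ (m, n) = (8, 16))
    (hv : 0 < v) (hdvd : Nat.lcm m n ∣ v) :
    ∀ r s : ℕ, r + s = v - 1 → HWPStarSolution v m n r s := by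
  suffices h : Even m ∧ Even n ∧ FullyHWFactorizable (V := Fin (m.lcm n)) Ne m n (m.lcm n - 1) by
    obtain ⟨hm, hn, h⟩ := h
    have hlcm : 0 < m.lcm n := Nat.pos_of_dvd_of_pos hdvd hv
    intro r s hrs
    exact (h.of_dvd hm hn (Nat.dvd_lcm_left m n) (Nat.dvd_lcm_right m n) hv hdvd).hwpStarSolution
      (Nat.pos_of_dvd_of_pos (Nat.dvd_lcm_left m n) hlcm)
      (Nat.pos_of_dvd_of_pos (Nat.dvd_lcm_right m n) hlcm) hrs
  rcases hmn with h | h | h | h | h | h <;> obtain ⟨rfl, rfl⟩ := Prod.mk.inj h <;>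
    refine ⟨by decide, by decide, ?_⟩
  · exact isValid_switchingTableFourSix.fullyHWFactorizable
  · exact isValid_switchingTableFourEight.fullyHWFactorizable
  · exact isValid_switchingTableFourTwelve.fullyHWFactorizable
  · exact isValid_switchingTableFourSixteen.fullyHWFactorizable
  · exact isValid_switchingTableSixTwelve.fullyHWFactorizable
  · exact isValid_switchingTableEightSixteen.fullyHWFactorizable
end

section
/- (Lemma 4.1, main odd construction.) Let m ≥ 3 and n ≥ 3 be odd integers, let h = lcm(m, n), and suppose 3 ∣ h. Suppose that for all nonnegative integers r′, s′ with r′ + s′ = h − 1 there is a solution to HWP*(h; m^{r′}, n^{s′}). Then for every odd positive integer x and all nonnegative integers r, s with r + s = h·x − 1, there is a solution to HWP*(h·x; m^r, n^s). -/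
/-!
Write `H = 3k` and `x = 2u + 1`. A Kirkman triple system on `3x` points has `3u + 1` parallel
classes. Replace every point by `k` copies and set one parallel class aside: its triples become `x`
disjoint copies of `K_H^*`, on all of which the given solution of the problem of order `H` is used
simultaneously. Each of the other `3u` classes, with the arcs in both directions, decomposes into
`2k` directed 2-factors whose cycles have any prescribed odd length `m ≥ 3` dividing `3k`: if
`3 ∣ m`, lift the triangles along `ZMod k` with a displacement of order `m / 3`; otherwise
`m ∣ k`, and the blow-up of a triangle by `ZMod m` decomposes into `m`-cycles that follow a proper
3-colouring of the `m`-cycle. It remains to divide the `3u` classes between `m` and `n` and to let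
the solution of order `H` supply the remainder.

A Kirkman triple system exists for every order `6u + 3`. Removing a point turns one triple of
each of the `3u + 1` parallel classes into a pair, and each class then partitions the complement of
its pair. In this form systems can be put together along the blocks of a pairwise balanced design
(Ray-Chaudhuri and Wilson). Truncated transversal designs with blocks of size 4 and 5, over a
finite field or over `ZMod n` with `n` prime to 6, reduce the existence to small orders, for which
there are direct constructions by differences.
-/

/-! ### Permutations all of whose cycles have the same length -/

/-- All cycles of the permutation `f` have length `m`; this is the condition on the individual
factors of a solution of the Hamilton–Waterloo problem. -/
def AllCyclesOfLength {V : Type*} (f : Equiv.Perm V) (m : ℕ) : Prop :=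
  ∀ x, Function.minimalPeriod f x = m

/-- The map `f` has an arc between `x` and `y`, in one of the two directions. -/
def Links {V : Type*} (f : V → V) (x y : V) : Prop :=
  f x = y ∨ f y = x

theorem allCyclesOfLength_iff {V : Type*} {f : Equiv.Perm V} {m : ℕ} :
    AllCyclesOfLength f m ↔ ∀ x (j : ℕ), (f ^ j) x = x ↔ m ∣ j := by
  have hf (x : V) (j : ℕ) : (f ^ j) x = x ↔ Function.minimalPeriod f x ∣ j := by
    rw [← Function.isPeriodicPt_iff_minimalPeriod_dvd, Function.IsPeriodicPt,
      Function.IsFixedPt, ← Equiv.Perm.coe_pow]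
  refine ⟨fun h x j => by rw [hf, h], fun h x => Nat.dvd_antisymm ?_ ?_⟩
  · rw [← hf, h]
  · rw [← h x, hf]

namespace AllCyclesOfLength

universe u

variable {V : Type u} {U : Type*} {f : Equiv.Perm V} {m : ℕ}

theorem pow_apply_eq_self_iff (h : AllCyclesOfLength f m) {x : V} {j : ℕ} :
    (f ^ j) x = x ↔ m ∣ j :=
  allCyclesOfLength_iff.1 h x j

theorem zpow_apply_eq_self_iff (h : AllCyclesOfLength f m) {x : V} {j : ℤ} :
    (f ^ j) x = x ↔ (m : ℤ) ∣ j := by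
  obtain ⟨n, rfl | rfl⟩ := j.eq_nat_or_neg
  · rw [zpow_natCast, h.pow_apply_eq_self_iff, Int.natCast_dvd_natCast]
  · rw [zpow_neg, zpow_natCast, Equiv.Perm.inv_eq_iff_eq, eq_comm, h.pow_apply_eq_self_iff,
      dvd_neg, Int.natCast_dvd_natCast]

theorem zpow_apply_eq_zpow_apply_iff (h : AllCyclesOfLength f m) {x : V} {i j : ℤ} :
    (f ^ i) x = (f ^ j) x ↔ (i : ZMod m) = j := by
  rw [ZMod.intCast_eq_intCast_iff_dvd_sub, ← h.zpow_apply_eq_self_iff (x := x), zpow_sub,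
    ← zpow_neg, ((Commute.refl f).zpow_zpow _ _).eq, Equiv.Perm.mul_apply, zpow_neg,
    Equiv.Perm.inv_eq_iff_eq, eq_comm]

protected theorem inv (h : AllCyclesOfLength f m) : AllCyclesOfLength f⁻¹ m := by
  refine allCyclesOfLength_iff.2 fun x j => ?_
  rw [inv_pow, Equiv.Perm.inv_eq_iff_eq, eq_comm, h.pow_apply_eq_self_iff]

theorem permCongr (h : AllCyclesOfLength f m) (e : V ≃ U) :
    AllCyclesOfLength (e.permCongr f) m := by
  refine allCyclesOfLength_iff.2 fun x j => ?_
  rw [← Equiv.permCongrHom_coe, ← map_pow, Equiv.permCongrHom_coe, Equiv.permCongr_apply,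
    ← Equiv.eq_symm_apply, h.pow_apply_eq_self_iff]

theorem prodCongr_refl (h : AllCyclesOfLength f m) :
    AllCyclesOfLength (Equiv.prodCongr (Equiv.refl U) f) m := by
  intro x
  change Function.minimalPeriod (Prod.map id f) x = m
  rw [Function.minimalPeriod_prodMap, h]
  simp

theorem exists_orbit_coordinates [NeZero m] (h : AllCyclesOfLength f m) :
    ∃ (O : Type u) (e : V ≃ O × ZMod m), ∀ x, e (f x) = ((e x).1, (e x).2 + 1) := by
  let s := Equiv.Perm.SameCycle.setoid f
  let g : Quotient s × ZMod m → V := fun w => (f ^ (w.2.val : ℤ)) w.1.out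
  have hg (w : Quotient s × ZMod m) (j : ℤ) : (j : ZMod m) = w.2 → (f ^ j) w.1.out = g w := by
    rintro hj
    exact h.zpow_apply_eq_zpow_apply_iff.2 (by simp [hj])
  have hmk (w : Quotient s × ZMod m) : Quotient.mk s (g w) = w.1 := by
    rw [← w.1.out_eq]
    exact Quotient.sound (Equiv.Perm.SameCycle.symm ⟨_, rfl⟩)
  have hbij : Function.Bijective g := by
    refine ⟨fun w w' hw => ?_, fun x => ?_⟩
    · have h₁ : w.1 = w'.1 := by rw [← hmk w, ← hmk w', hw]
      refine Prod.ext h₁ ?_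
      simpa [g, h₁, h.zpow_apply_eq_zpow_apply_iff] using hw
    · obtain ⟨i, hi⟩ := Quotient.exact (Quotient.mk s x).out_eq
      exact ⟨(Quotient.mk s x, i), (hg _ i rfl).symm.trans hi⟩
  refine ⟨Quotient s, (Equiv.ofBijective g hbij).symm, fun x => ?_⟩
  obtain ⟨w, rfl⟩ := hbij.2 x
  rw [Equiv.symm_apply_eq, Equiv.ofBijective_symm_apply_apply, Equiv.ofBijective_apply,
    ← hg (w.1, w.2 + 1) (w.2.val + 1) (by simp), add_comm, zpow_one_add, Equiv.Perm.mul_apply]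

end AllCyclesOfLength

theorem allCyclesOfLength_addRight_one (m : ℕ) :
    AllCyclesOfLength (Equiv.addRight (1 : ZMod m)) m := by
  refine allCyclesOfLength_iff.2 fun x j => ?_
  simp [ZMod.natCast_eq_zero_iff]

/-! ### Lifting a permutation to a product with a cyclic group -/

theorem exists_isUnit_sum_eq_zero {R : Type*} [CommRing R] (h2 : IsUnit (2 : R)) {l : ℕ}
    (hl : Odd l) (hl3 : 3 ≤ l) : ∃ a : ZMod l → R, (∀ i, IsUnit (a i)) ∧
      ∑ i ∈ Finset.range l, a i = 0 := by
  refine ⟨fun i => if i = 1 then -2 else (-1) ^ i.val, fun i => ?_, ?_⟩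
  · dsimp only
    split_ifs
    exacts [h2.neg, isUnit_one.neg.pow _]
  have hsum : ∑ i ∈ Finset.range l, ((if i = 1 then (-1 : R) else 0) + (-1) ^ i) = 0 := by
    rw [Finset.sum_add_distrib, Finset.sum_ite_eq' (Finset.range l) 1, neg_one_geom_sum,
      if_pos (Finset.mem_range.2 (by lia)), if_neg (Nat.not_even_iff_odd.2 hl), neg_add_cancel]
  rw [← hsum]
  refine Finset.sum_congr rfl fun i hi => ?_
  have hil := Finset.mem_range.1 hi
  have hi1 : (i : ZMod l) = 1 ↔ i = 1 := by
    rw [← Nat.cast_one, ZMod.natCast_eq_natCast_iff', Nat.mod_eq_of_lt hil,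
      Nat.mod_eq_of_lt (by lia)]
  rcases eq_or_ne i 1 with rfl | hne
  · norm_num
  · simp [hi1, hne, ZMod.val_cast_of_lt hil]

theorem sum_range_zmod_add {M : Type*} [AddCommMonoid M] {l : ℕ} [NeZero l] (F : ZMod l → M)
    (z : ZMod l) : ∑ i ∈ Finset.range l, F (z + i) = ∑ i, F i := by
  refine Finset.sum_bij (fun i _ => z + i) (fun _ _ => Finset.mem_univ _) ?_ ?_
    (fun _ _ => rfl)
  · intro i hi j hj h
    rwa [add_right_inj, ZMod.natCast_eq_natCast_iff',
      Nat.mod_eq_of_lt (Finset.mem_range.1 hi), Nat.mod_eq_of_lt (Finset.mem_range.1 hj)] at h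
  · exact fun i _ => ⟨(i - z).val, Finset.mem_range.2 (ZMod.val_lt _), by simp⟩

section Shear

variable {T G : Type*} [AddCommGroup G]

/-- The permutation `(t, y) ↦ (τ t, y + v t)` of `T × G`, covering the permutation `τ` of `T`. -/
def shear (τ : Equiv.Perm T) (v : T → G) : Equiv.Perm (T × G) :=
  Equiv.prodShear τ fun t => Equiv.addRight (v t)

theorem shear_apply (τ : Equiv.Perm T) (v : T → G) (t : T) (y : G) :
    shear τ v (t, y) = (τ t, y + v t) :=
  rfl

theorem shear_pow_apply (τ : Equiv.Perm T) (v : T → G) (j : ℕ) (t : T) (y : G) :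
    (shear τ v ^ j) (t, y) = ((τ ^ j) t, y + ∑ i ∈ Finset.range j, v ((τ ^ i) t)) := by
  induction j with
  | zero => simp
  | succ j ih =>
    rw [pow_succ', Equiv.Perm.mul_apply, ih, shear_apply, pow_succ', Equiv.Perm.mul_apply,
      Finset.sum_range_succ, add_assoc]

theorem allCyclesOfLength_shear {τ : Equiv.Perm T} {l g : ℕ} (hτ : AllCyclesOfLength τ l)
    {v : T → G}
    (hv : ∀ t, addOrderOf (∑ i ∈ Finset.range l, v ((τ ^ i) t)) = g) :
    AllCyclesOfLength (shear τ v) (l * g) := by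
  have hsum (t : T) (n : ℕ) : ∑ i ∈ Finset.range (l * n), v ((τ ^ i) t) =
      n • ∑ i ∈ Finset.range l, v ((τ ^ i) t) := by
    induction n with
    | zero => simp
    | succ n ih =>
      have hper (i : ℕ) : (τ ^ (l * n + i)) t = (τ ^ i) t := by
        rw [add_comm, pow_add, Equiv.Perm.mul_apply, hτ.pow_apply_eq_self_iff.2 ⟨n, rfl⟩]
      simp only [Nat.mul_succ, Finset.sum_range_add, ih, hper, succ_nsmul]
  rw [allCyclesOfLength_iff]
  rintro ⟨t, y⟩ j
  rw [shear_pow_apply, Prod.mk.injEq, hτ.pow_apply_eq_self_iff, add_eq_left]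
  constructor
  · rintro ⟨⟨n, rfl⟩, hn⟩
    rw [hsum, ← addOrderOf_dvd_iff_nsmul_eq_zero, hv] at hn
    exact Nat.mul_dvd_mul_left l hn
  · rintro ⟨n, rfl⟩
    refine ⟨⟨g * n, mul_assoc ..⟩, ?_⟩
    rw [mul_assoc, hsum, ← addOrderOf_dvd_iff_nsmul_eq_zero, hv]
    exact dvd_mul_right g n

end Shear

/-- The multipliers of `d` along a cycle of `τ` are units with sum zero, so that every arc over
`τ` is hit by exactly one `d`, while the total displacement along the cycle does not depend
on `d`. -/
theorem AllCyclesOfLength.exists_lift {T : Type*} {τ : Equiv.Perm T} {l q g : ℕ}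
    (hτ : AllCyclesOfLength τ l) (hl : Odd l) (hl3 : 3 ≤ l) (hq : Odd q) (hg : g ∣ q) :
    ∃ σ : ZMod q → Equiv.Perm (T × ZMod q), (∀ d, AllCyclesOfLength (σ d) (l * g)) ∧
      ∀ t y y', ∃ d, σ d (t, y) = (τ t, y') := by
  have : NeZero l := ⟨by lia⟩
  have h2 : IsUnit (2 : ZMod q) := by
    simpa using (ZMod.isUnit_iff_coprime 2 q).2 (by simpa using hq)
  obtain ⟨O, e, he⟩ := hτ.exists_orbit_coordinates
  obtain ⟨a, ha, hsum⟩ := exists_isUnit_sum_eq_zero h2 hl hl3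
  obtain ⟨b, hb⟩ := hg
  let v (d : ZMod q) (z : ZMod l) : ZMod q := a z * d + if z = 0 then (b : ZMod q) else 0
  refine ⟨fun d => shear τ fun t => v d (e t).2, fun d => allCyclesOfLength_shear hτ fun t => ?_,
    fun t y y' => ?_⟩
  · have hpow (i : ℕ) : (e ((τ ^ i) t)).2 = (e t).2 + i := by
      induction i with
      | zero => simp
      | succ i ih => rw [pow_succ', Equiv.Perm.mul_apply, he, ih]; push_cast; ring
    have ha0 : ∑ z, a z = 0 := by rw [← hsum, ← sum_range_zmod_add a 0]; simp
    have hv : ∑ z, v d z = b := by simp [v, Finset.sum_add_distrib, ← Finset.sum_mul, ha0]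
    have hq0 : q ≠ 0 := hq.pos.ne'
    have hb0 : 0 < b := Nat.pos_of_ne_zero fun h0 => hq0 (by rw [hb, h0, mul_zero])
    simp only [hpow]
    rw [sum_range_zmod_add (v d), hv, ZMod.addOrderOf_coe _ hq0, hb, Nat.gcd_mul_left_left,
      Nat.mul_div_cancel _ hb0]
  · obtain ⟨u, hu⟩ := (ha (e t).2).exists_right_inv
    refine ⟨u * (y' - y - if (e t).2 = 0 then (b : ZMod q) else 0), ?_⟩
    rw [shear_apply, Prod.mk.injEq]
    refine ⟨rfl, ?_⟩
    linear_combination (y' - y - if (e t).2 = 0 then (b : ZMod q) else 0) * hu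

/-! ### Blow-ups of a permutation -/

/-- The bidirected graph formed by the arcs of the permutation `c` and their reverses, with every
vertex replaced by a copy of `K`, decomposes into `2 |K|` directed 2-factors with all cycles of
length `m`. -/
def BlowupFactorizable {W : Type*} (c : Equiv.Perm W) (K : Type*) (m : ℕ) : Prop :=
  ∃ σ : Bool × K → Equiv.Perm (W × K), (∀ i, AllCyclesOfLength (σ i) m) ∧
    ∀ w w', Links c w w' → ∀ y y', ∃ i, σ i (w, y) = (w', y')

section Blowup

variable {W K : Type*} {c : Equiv.Perm W} {m : ℕ}

theorem BlowupFactorizable.of_equiv (h : BlowupFactorizable c K m) {K' : Type*} (e : K ≃ K') :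
    BlowupFactorizable c K' m := by
  obtain ⟨σ, hσ, hlinks⟩ := h
  refine ⟨fun i => (Equiv.prodCongr (Equiv.refl W) e).permCongr (σ (i.1, e.symm i.2)),
    fun i => (hσ _).permCongr _, fun w w' hw y y' => ?_⟩
  obtain ⟨⟨b, k⟩, hi⟩ := hlinks w w' hw (e.symm y) (e.symm y')
  exact ⟨(b, e k), by simp [hi]⟩

theorem BlowupFactorizable.prod_zmod (h : BlowupFactorizable c K m) (hm : Odd m) (hm3 : 3 ≤ m)
    {q : ℕ} (hq : Odd q) : BlowupFactorizable c (K × ZMod q) m := by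
  obtain ⟨σ, hσ, hlinks⟩ := h
  choose σ' hσ' hlift using fun i => (hσ i).exists_lift hm hm3 hq (one_dvd q)
  refine ⟨fun i => (Equiv.prodAssoc W K (ZMod q)).permCongr (σ' (i.1, i.2.1) i.2.2),
    fun i => (mul_one m ▸ hσ' _ _).permCongr _, ?_⟩
  rintro w w' hw ⟨y, z⟩ ⟨y', z'⟩
  obtain ⟨i, hi⟩ := hlinks w w' hw y y'
  obtain ⟨d, hd⟩ := hlift i (w, y) z z'
  exact ⟨(i.1, i.2, d), by simp [hd, hi]⟩

theorem AllCyclesOfLength.blowupFactorizable_zmod {l q g : ℕ} (hc : AllCyclesOfLength c l)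
    (hl : Odd l) (hl3 : 3 ≤ l) (hq : Odd q) (hg : g ∣ q) :
    BlowupFactorizable c (ZMod q) (l * g) := by
  obtain ⟨σ, hσ, hlift⟩ := hc.exists_lift hl hl3 hq hg
  obtain ⟨σ', hσ', hlift'⟩ := hc.inv.exists_lift hl hl3 hq hg
  refine ⟨fun i => if i.1 then σ i.2 else σ' i.2, ?_, ?_⟩
  · rintro ⟨_ | _, d⟩
    exacts [hσ' d, hσ d]
  · rintro w w' (rfl | rfl) y y'
    · obtain ⟨d, hd⟩ := hlift w y y'
      exact ⟨(true, d), hd⟩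
    · obtain ⟨d, hd⟩ := hlift' (c w') y y'
      exact ⟨(false, d), by simpa using hd⟩

theorem AllCyclesOfLength.blowupFactorizable_of_addRight_one {l : ℕ} [NeZero l]
    (hc : AllCyclesOfLength c l)
    (h : BlowupFactorizable (Equiv.addRight (1 : ZMod l)) K m) : BlowupFactorizable c K m := by
  obtain ⟨O, e, he⟩ := hc.exists_orbit_coordinates
  obtain ⟨σ, hσ, hlinks⟩ := h
  let Φ : O × ZMod l × K ≃ W × K :=
    (Equiv.prodAssoc _ _ _).symm.trans (Equiv.prodCongr e.symm (Equiv.refl K))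
  refine ⟨fun i => Φ.permCongr (Equiv.prodCongr (Equiv.refl O) (σ i)),
    fun i => (hσ i).prodCongr_refl.permCongr Φ, fun w w' hw y y' => ?_⟩
  have hfst : (e w).1 = (e w').1 := by rcases hw with rfl | rfl <;> rw [he]
  have hsnd : Links (Equiv.addRight (1 : ZMod l)) (e w).2 (e w').2 := by
    rcases hw with rfl | rfl
    · exact .inl (by rw [he]; rfl)
    · exact .inr (by rw [he]; rfl)
  obtain ⟨i, hi⟩ := hlinks _ _ hsnd y y'
  refine ⟨i, ?_⟩
  simp [Φ, hi, hfst]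

theorem exists_zmod_three_coloring {m : ℕ} (hm : 3 ≤ m) :
    ∃ L : ZMod m → ZMod 3, ∀ i, L (i + 1) ≠ L i := by
  have : NeZero m := ⟨by lia⟩
  refine ⟨fun i => if i.val + 1 = m then 2 else (i.val % 2 : ℕ), fun i => ?_⟩
  have hi := ZMod.val_lt i
  have hsucc : (i + 1).val = (i.val + 1) % m := by
    rw [← ZMod.val_natCast, Nat.cast_add, ZMod.natCast_rightInverse i, Nat.cast_one]
  dsimp only
  rcases eq_or_ne (i.val + 1) m with h | h
  · rw [hsucc, h, Nat.mod_self, if_pos rfl, if_neg (by lia)]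
    decide
  · rw [hsucc, Nat.mod_eq_of_lt (by lia), if_neg h]
    obtain ⟨h2, h2'⟩ | ⟨h2, h2'⟩ : i.val % 2 = 0 ∧ (i.val + 1) % 2 = 1 ∨
        i.val % 2 = 1 ∧ (i.val + 1) % 2 = 0 := by lia
    all_goals rw [h2, h2']; split_ifs <;> decide

theorem exists_zmod_three_units {m : ℕ} (hm : m.Coprime 6) :
    ∃ u : ZMod 3 → (ZMod m)ˣ, ∀ l l', l ≠ l' → IsUnit ((u l' : ZMod m) - u l) := by
  have h2 : IsUnit (2 : ZMod m) :=
    (ZMod.isUnit_iff_coprime 2 m).2 (hm.symm.coprime_dvd_left (by norm_num))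
  have h3 : IsUnit (3 : ZMod m) :=
    (ZMod.isUnit_iff_coprime 3 m).2 (hm.symm.coprime_dvd_left (by norm_num))
  refine ⟨![1, h2.unit, h3.unit], fun l l' hne => ?_⟩
  have h1 : IsUnit (1 : ZMod m) := isUnit_one
  have hd : (1 - 2 : ZMod m) = -1 ∧ (1 - 3 : ZMod m) = -2 ∧ (2 - 1 : ZMod m) = 1 ∧
      (2 - 3 : ZMod m) = -1 ∧ (3 - 1 : ZMod m) = 2 ∧ (3 - 2 : ZMod m) = 1 := by norm_num
  fin_cases l <;> fin_cases l' <;>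
    first | exact absurd rfl hne | simp [hd, h1, h2, IsUnit.neg_iff]

/-- In the `j`-th cycle of each 2-factor the levels follow a proper 3-colouring `L` of the
`m`-cycle, up to translation and sign, and a vertex at level `l` in position `i` has second
coordinate `u l * i` up to translation. Since the difference of two values of `u` is a unit, an
arc from level `l` to level `l'` determines the position `i` in which it is used. -/
theorem blowupFactorizable_addRight_one_zmod_three {m : ℕ} (hm : 3 ≤ m) (hm6 : m.Coprime 6) :
    BlowupFactorizable (Equiv.addRight (1 : ZMod 3)) (ZMod m) m := by
  obtain ⟨L, hL⟩ := exists_zmod_three_coloring hm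
  obtain ⟨u, hu⟩ := exists_zmod_three_units hm6
  let s (b : Bool) : ZMod 3 := bif b then 1 else -1
  have hs : ∀ a d : ZMod 3, a ≠ 0 → d ≠ 0 → ∃ b, s b * a = d := by decide
  let Ψ (k : Bool × ZMod m) : ZMod 3 × ZMod m ≃ ZMod 3 × ZMod m :=
    { toFun := fun x => (x.1 + s k.1 * L x.2, u (x.1 + s k.1 * L x.2) * x.2 + k.2)
      invFun := fun x =>
        (x.1 - s k.1 * L (↑(u x.1)⁻¹ * (x.2 - k.2)), ↑(u x.1)⁻¹ * (x.2 - k.2))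
      left_inv := fun x => by simp
      right_inv := fun x => by simp }
  refine ⟨fun k => (Ψ k).permCongr (Equiv.prodCongr (Equiv.refl _) (Equiv.addRight 1)),
    fun k => (allCyclesOfLength_addRight_one m).prodCongr_refl.permCongr _,
    fun l l' hl y y' => ?_⟩
  have hne : l ≠ l' := by rcases hl with rfl | rfl <;> simp
  obtain ⟨v, hv⟩ := (hu l l' hne).exists_right_inv
  let i := v * (y' - y - u l')
  obtain ⟨b, hb⟩ := hs (L (i + 1) - L i) (l' - l) (sub_ne_zero.2 (hL i)) (sub_ne_zero.2 hne.symm)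
  have hl' : l - s b * L i + s b * L (i + 1) = l' := by linear_combination hb
  refine ⟨(b, y - u l * i), ?_⟩
  have hy : (l, y) = Ψ (b, y - u l * i) (l - s b * L i, i) := by simp [Ψ]
  rw [hy, Equiv.permCongr_apply, Equiv.symm_apply_apply]
  simp only [Ψ, Equiv.coe_fn_mk, Equiv.prodCongr_apply, Prod.map, Equiv.refl_apply,
    Equiv.coe_addRight, hl', Prod.mk.injEq, true_and]
  linear_combination (y' - y - u l') * hv

end Blowup

/-! ### Kirkman frames on graphs -/

section KirkmanFrame

universe u v

variable {X : Type u} {Y : Type v} {G : SimpleGraph X} {C : X → X × Bool → X × Bool}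

/-- A Kirkman frame on the graph `G`: for every vertex `x`, the non-trivial cycles of `C x`
partition (neighbours of `x`) × `Bool` into triples, and two points over adjacent vertices lie in
a common triple. For a complete graph on `r` vertices this is a Kirkman triple system of order
`2 * r + 1` with one point removed: the pairs `{x} × Bool` are the truncated triples, and the
parallel class containing such a pair is indexed by `x`. -/
structure IsKirkmanFrame (G : SimpleGraph X) (C : X → X × Bool → X × Bool) : Prop where
  cube_apply : ∀ x p, C x (C x (C x p)) = p
  apply_eq_self_iff : ∀ {x p}, C x p = p ↔ ¬ G.Adj x p.1
  exists_links : ∀ {p q}, G.Adj p.1 q.1 → ∃ x, Links (C x) p q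

/-- The graph `G` carries a Kirkman frame. -/
def HasKirkmanFrame (G : SimpleGraph X) : Prop :=
  ∃ C, IsKirkmanFrame G C

theorem IsKirkmanFrame.adj_apply (hC : IsKirkmanFrame G C) {x : X} {p : X × Bool}
    (h : G.Adj x p.1) : G.Adj x (C x p).1 := by
  contrapose! h
  rw [← hC.apply_eq_self_iff] at h ⊢
  simpa only [h] using hC.cube_apply x p

theorem hasKirkmanFrame_of_subsingleton [Subsingleton X] (G : SimpleGraph X) :
    HasKirkmanFrame G := by
  refine ⟨fun _ p => p, fun _ _ => rfl, fun {x p} => ?_, fun {p q} h => ?_⟩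
  · simp [Subsingleton.elim x p.1]
  · exact (h.ne (Subsingleton.elim _ _)).elim

theorem HasKirkmanFrame.map (h : HasKirkmanFrame G) {f : X → Y} (hf : f.Injective) :
    HasKirkmanFrame (G.map f) := by
  obtain ⟨C, hC⟩ := h
  let F : X × Bool → Y × Bool := Prod.map f id
  have hF : Function.Injective F := hf.prodMap Function.injective_id
  let D : Y → Y × Bool → Y × Bool :=
    Function.extend f (fun x => Function.extend F (F ∘ C x) id) fun _ => id
  have hD (x : X) (p : X × Bool) : D (f x) (F p) = F (C x p) := by
    simp only [D, hf.extend_apply, hF.extend_apply, Function.comp_apply]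
  have hid {y : Y} {p : Y × Bool} (hp : ¬ ∃ x q, f x = y ∧ F q = p) : D y p = p := by
    by_cases hy : ∃ x, f x = y
    · obtain ⟨x, rfl⟩ := hy
      simp only [D, hf.extend_apply]
      exact Function.extend_apply' _ _ _ fun ⟨q, hq⟩ => hp ⟨x, q, rfl, hq⟩
    · simp only [D, Function.extend_apply' _ _ _ hy, id]
  refine ⟨D, fun y p => ?_, fun {y p} => ?_, fun {p q} hpq => ?_⟩
  · by_cases hp : ∃ x q, f x = y ∧ F q = p
    · obtain ⟨x, q, rfl, rfl⟩ := hp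
      rw [hD, hD, hD, hC.cube_apply]
    · simp only [hid hp]
  · by_cases hp : ∃ x q, f x = y ∧ F q = p
    · obtain ⟨x, q, rfl, rfl⟩ := hp
      rw [hD, hF.eq_iff, hC.apply_eq_self_iff]
      exact not_congr (SimpleGraph.map_adj_apply (f := ⟨f, hf⟩)).symm
    · refine iff_of_true (hid hp) ?_
      rintro ⟨-, x, z, -, hx, hz⟩
      exact hp ⟨x, (z, p.2), hx, Prod.ext hz rfl⟩
  · obtain ⟨y, b⟩ := p
    obtain ⟨z, b'⟩ := q
    obtain ⟨-, p, q, hpq, rfl, rfl⟩ := hpq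
    obtain ⟨x, hx⟩ := hC.exists_links (p := (p, b)) (q := (q, b')) hpq
    exact ⟨f x, hx.imp (fun h => (hD _ _).trans (congrArg F h))
      fun h => (hD _ _).trans (congrArg F h)⟩

theorem HasKirkmanFrame.of_decomposition {ι : Type*} {G : ι → SimpleGraph X} {H : SimpleGraph X}
    (hG : ∀ i, HasKirkmanFrame (G i)) (hle : ∀ i, G i ≤ H)
    (hH : ∀ x y, H.Adj x y → ∃! i, (G i).Adj x y) : HasKirkmanFrame H := by
  classical
  choose C hC using hG
  let D (x : X) (p : X × Bool) : X × Bool :=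
    if h : ∃ i, (G i).Adj x p.1 then C h.choose x p else p
  have hD {i x p} (h : (G i).Adj x p.1) : D x p = C i x p := by
    have h' : ∃ i, (G i).Adj x p.1 := ⟨i, h⟩
    simp only [D, dif_pos h', (hH _ _ (hle _ h)).unique h'.choose_spec h]
  have hid {x p} (h : ¬ H.Adj x p.1) : D x p = p :=
    dif_neg fun ⟨i, hi⟩ => h (hle i hi)
  refine ⟨D, fun x p => ?_, fun {x p} => ?_, fun {p q} hpq => ?_⟩
  · by_cases h : H.Adj x p.1
    · obtain ⟨i, hi, -⟩ := hH _ _ h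
      have hi' := (hC i).adj_apply hi
      rw [hD hi, hD hi', hD ((hC i).adj_apply hi'), (hC i).cube_apply]
    · simp only [hid h]
  · refine ⟨fun h hx => ?_, hid⟩
    obtain ⟨i, hi, -⟩ := hH _ _ hx
    rw [hD hi, (hC i).apply_eq_self_iff] at h
    exact h hi
  · obtain ⟨i, hi, -⟩ := hH _ _ hpq
    obtain ⟨x, hx⟩ := (hC i).exists_links hi
    refine ⟨x, ?_⟩
    rcases hx with hx | hx
    · have hp : (G i).Adj x p.1 := by
        by_contra hp
        rw [← (hC i).apply_eq_self_iff, hx] at hp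
        exact hi.ne (congrArg Prod.fst hp).symm
      exact .inl ((hD hp).trans hx)
    · have hq : (G i).Adj x q.1 := by
        by_contra hq
        rw [← (hC i).apply_eq_self_iff, hx] at hq
        exact hi.ne (congrArg Prod.fst hq)
      exact .inr ((hD hq).trans hx)

/-- Every vertex is replaced by three: the class of `(x, d)` moves the second coordinate by `d`
while the class of `x` moves the first one. -/
theorem HasKirkmanFrame.comap_fst_zmod_three (h : HasKirkmanFrame G) :
    HasKirkmanFrame (G.comap (Prod.fst : X × ZMod 3 → X)) := by
  classical
  obtain ⟨C, hC⟩ := h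
  let D (x : X × ZMod 3) (p : (X × ZMod 3) × Bool) : (X × ZMod 3) × Bool :=
    if G.Adj x.1 p.1.1 then
      (((C x.1 (p.1.1, p.2)).1, p.1.2 + x.2), (C x.1 (p.1.1, p.2)).2) else p
  have hD {x d y z b} (h : G.Adj x y) :
      D (x, d) ((y, z), b) = (((C x (y, b)).1, z + d), (C x (y, b)).2) := if_pos h
  refine ⟨D, ?_, ?_, ?_⟩
  · rintro ⟨x, d⟩ ⟨⟨y, z⟩, b⟩
    by_cases h : G.Adj x y
    · have h' := hC.adj_apply (p := (y, b)) h
      rw [hD h, hD h', hD (hC.adj_apply h'), hC.cube_apply]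
      have hd : z + d + d + d = z := by linear_combination d * (by decide : (3 : ZMod 3) = 0)
      rw [hd]
    · simp only [D, h, if_false]
  · rintro ⟨x, d⟩ ⟨⟨y, z⟩, b⟩
    by_cases h : G.Adj x y
    · refine iff_of_false (fun heq => ?_) (not_not_intro h)
      simp only [hD h, Prod.mk.injEq] at heq
      exact hC.apply_eq_self_iff.1 (Prod.ext heq.1.1 heq.2 : C x (y, b) = (y, b)) h
    · exact iff_of_true (if_neg h) h
  · have key {y z b y' z' b' x} (h : G.Adj y y') (hx : C x (y, b) = (y', b')) :
        D (x, z' - z) ((y, z), b) = ((y', z'), b') := by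
      have hy : G.Adj x y := by
        by_contra hy
        rw [hC.apply_eq_self_iff.2 hy] at hx
        exact h.ne (congrArg Prod.fst hx)
      rw [hD hy, hx, add_sub_cancel]
    rintro ⟨⟨y, z⟩, b⟩ ⟨⟨y', z'⟩, b'⟩ (hyy : G.Adj y y')
    obtain ⟨x, hx | hx⟩ := hC.exists_links (p := (y, b)) (q := (y', b')) hyy
    · exact ⟨_, .inl (key hyy hx)⟩
    · exact ⟨_, .inr (key hyy.symm hx)⟩

end KirkmanFrame

/-! ### Kirkman triple systems -/

section Replication

/-- There is a Kirkman triple system in which every point lies on `r` triples, that is, one of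
order `2 * r + 1`; it is recorded through the Kirkman frame left after removing a point. -/
def IsKirkmanReplication (r : ℕ) : Prop :=
  HasKirkmanFrame (⊤ : SimpleGraph (Fin r))

theorem HasKirkmanFrame.of_iso {X Y : Type*} {G : SimpleGraph X} {H : SimpleGraph Y} (e : G ≃g H)
    (h : HasKirkmanFrame G) : HasKirkmanFrame H := by
  convert h.map e.injective
  ext x y
  obtain ⟨x, rfl⟩ := e.surjective x
  obtain ⟨y, rfl⟩ := e.surjective y
  exact e.map_rel_iff.trans (SimpleGraph.map_adj_apply (f := e.toEquiv.toEmbedding)).symm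

theorem map_subtype_top_adj {X : Type*} {S : Set X} {x y : X} :
    ((⊤ : SimpleGraph S).map Subtype.val).Adj x y ↔
      (x ∈ S ∧ y ∈ S) ∧ x ≠ y := by
  refine (SimpleGraph.map_adj (Function.Embedding.subtype (· ∈ S)) ⊤ x y).trans ?_
  simp only [SimpleGraph.top_adj, Function.Embedding.subtype_apply]
  constructor
  · rintro ⟨a, b, hab, rfl, rfl⟩
    exact ⟨⟨a.2, b.2⟩, Subtype.coe_ne_coe.2 hab⟩
  · rintro ⟨⟨hx, hy⟩, hxy⟩
    exact ⟨⟨x, hx⟩, ⟨y, hy⟩, fun h => hxy (congrArg Subtype.val h), rfl, rfl⟩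

variable {X : Type*} [Finite X]

theorem isKirkmanReplication_card :
    IsKirkmanReplication (Nat.card X) ↔ HasKirkmanFrame (⊤ : SimpleGraph X) :=
  ⟨.of_iso (.completeGraph (Finite.equivFin X).symm), .of_iso (.completeGraph (Finite.equivFin X))⟩

theorem HasKirkmanFrame.of_blocks {β : Type*} {H : SimpleGraph X} {B : β → Set X}
    (hB : ∀ b, IsKirkmanReplication (B b).ncard) (hle : ∀ b, (B b).Pairwise H.Adj)
    (hH : ∀ x y, H.Adj x y → ∃! b, x ∈ B b ∧ y ∈ B b) : HasKirkmanFrame H := by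
  refine .of_decomposition
    (fun b => (isKirkmanReplication_card.1 (hB b)).map Subtype.val_injective)
    (fun b x y h => ?_) fun x y h => ?_
  · obtain ⟨⟨hx, hy⟩, hxy⟩ := map_subtype_top_adj.1 h
    exact hle b hx hy hxy
  · simpa only [map_subtype_top_adj, h.ne, ne_eq, not_false_eq_true, and_true] using hH x y h

theorem HasKirkmanFrame.isKirkmanReplication_card_add_one {I : Type*} {π : X → I}
    (h : HasKirkmanFrame ((⊤ : SimpleGraph I).comap π))
    (hπ : ∀ i, IsKirkmanReplication ((π ⁻¹' {i}).ncard + 1)) :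
    IsKirkmanReplication (Nat.card X + 1) := by
  rw [← Finite.card_option, isKirkmanReplication_card]
  let B (i : I) : Set (Option X) := insert none (some '' (π ⁻¹' {i}))
  have hB (i : I) : HasKirkmanFrame (⊤ : SimpleGraph (B i)) := by
    rw [← isKirkmanReplication_card, Nat.card_coe_set_eq, Set.ncard_insert_of_notMem (by simp),
      Set.ncard_image_of_injective _ (Option.some_injective X)]
    exact hπ i
  let G (o : Option I) : SimpleGraph (Option X) :=
    o.elim (((⊤ : SimpleGraph I).comap π).map some) fun i => (⊤ : SimpleGraph (B i)).map Subtype.val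
  have hnone (x y : Option X) : (G none).Adj x y ↔ ∃ a b, π a ≠ π b ∧ some a = x ∧ some b = y :=
    SimpleGraph.map_adj Function.Embedding.some ((⊤ : SimpleGraph I).comap π) x y
  have hsome (i : I) (x y : Option X) :
      (G (some i)).Adj x y ↔ (∀ a ∈ x, π a = i) ∧ (∀ b ∈ y, π b = i) ∧ x ≠ y := by
    have hmem (x : Option X) : x ∈ B i ↔ ∀ a ∈ x, π a = i := by cases x <;> simp [B]
    rw [← hmem, ← hmem, ← and_assoc]
    exact map_subtype_top_adj
  refine .of_decomposition (G := G) ?_ (fun _ => le_top) fun x y hxy => ?_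
  · rintro (_ | i)
    exacts [h.map (Option.some_injective X), (hB i).map Subtype.val_injective]
  · rw [SimpleGraph.top_adj] at hxy
    clear_value G
    cases x with
    | none =>
      cases y with
      | none => exact (hxy rfl).elim
      | some y => simp [ExistsUnique, Option.forall, hnone, hsome]
    | some x =>
      cases y with
      | none => simp [ExistsUnique, Option.forall, hnone, hsome]
      | some y =>
        simpa [ExistsUnique, Option.exists, Option.forall, hnone, hsome, hxy,
          eq_comm (a := π y)] using ne_or_eq (π x) (π y)

theorem HasKirkmanFrame.isKirkmanReplication_three_mul_card_add_one {I : Type*} {π : X → I}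
    (h : HasKirkmanFrame ((⊤ : SimpleGraph I).comap (π ∘ Prod.fst : X × ZMod 3 → I)))
    (hπ : ∀ i, IsKirkmanReplication (3 * (π ⁻¹' {i}).ncard + 1)) :
    IsKirkmanReplication (3 * Nat.card X + 1) := by
  have hcard : Nat.card (X × ZMod 3) = 3 * Nat.card X := by
    rw [Nat.card_prod, Nat.card_zmod, mul_comm]
  rw [← hcard]
  refine h.isKirkmanReplication_card_add_one fun i => ?_
  have hfib : (π ∘ Prod.fst : X × ZMod 3 → I) ⁻¹' {i} = (π ⁻¹' {i}) ×ˢ Set.univ := by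
    ext; simp
  rw [hfib, Set.ncard_prod, Set.ncard_univ, Nat.card_zmod, mul_comm]
  exact hπ i

theorem isKirkmanReplication_one : IsKirkmanReplication 1 :=
  hasKirkmanFrame_of_subsingleton _

/-- The permutations `D a` of `V` have all cycles of length three and these cycles are the
parallel classes of a Kirkman triple system on `V`. -/
structure IsKirkmanTripleSystem {ι V : Type*} (D : ι → V → V) : Prop where
  cube_apply : ∀ a x, D a (D a (D a x)) = x
  apply_ne : ∀ a x, D a x ≠ x
  exists_links : ∀ x y, x ≠ y → ∃ a, Links (D a) x y
  card_eq : Nat.card V = 2 * Nat.card ι + 1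

namespace IsKirkmanTripleSystem

variable {ι V : Type*} {D : ι → V → V}

theorem apply_mem_block_iff (hD : IsKirkmanTripleSystem D) {o : V} {a : ι} {x : V} :
    D a x ∈ ({o, D a o, D a (D a o)} : Set V) ↔ x ∈ ({o, D a o, D a (D a o)} : Set V) := by
  have hDinj : Function.Injective (D a) := fun x y h => by
    rw [← hD.cube_apply a x, h, hD.cube_apply]
  have ho : D a x = o ↔ x = D a (D a o) := by rw [← hDinj.eq_iff (b := D a _), hD.cube_apply]
  simp only [Set.mem_insert_iff, Set.mem_singleton_iff, hDinj.eq_iff, ho]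
  tauto

variable [Finite ι] [Finite V]

theorem exists_star_coordinates (hD : IsKirkmanTripleSystem D) (o : V) :
    ∃ s : ι × Bool → V, s.Injective ∧ (∀ x, x ∈ Set.range s ↔ x ≠ o) ∧
      ∀ a p, s p ∈ ({o, D a o, D a (D a o)} : Set V) ↔ p.1 = a := by
  classical
  let s (p : ι × Bool) : V := if p.2 then D p.1 (D p.1 o) else D p.1 o
  have hso (p) : s p ≠ o := by
    rcases p with ⟨a, _ | _⟩
    · exact hD.apply_ne a o
    · exact fun h => hD.apply_ne a o (by simpa [s, hD.cube_apply] using (congrArg (D a) h).symm)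
  have hsurj : Function.Surjective (fun p => (⟨s p, hso p⟩ : {x // x ≠ o})) := by
    rintro ⟨x, hx⟩
    obtain ⟨a, rfl | ha⟩ := hD.exists_links o x hx.symm
    · exact ⟨(a, false), rfl⟩
    · exact ⟨(a, true), Subtype.ext (by simp [s, ← ha, hD.cube_apply])⟩
  have hcard : Nat.card (ι × Bool) = Nat.card {x // x ≠ o} := by
    have : Fintype V := Fintype.ofFinite V
    rw [Nat.card_prod, Nat.card_eq_fintype_card (α := {x // x ≠ o}), Fintype.card_subtype_compl,
      Fintype.card_subtype_eq, ← Nat.card_eq_fintype_card, hD.card_eq]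
    simp [mul_comm]
  have hs := hsurj.bijective_of_nat_card_le hcard.le
  have hinj : s.Injective := fun p q h => hs.1 (Subtype.ext h)
  refine ⟨s, hinj, fun x => ⟨?_, fun hx => ?_⟩, fun a p => ?_⟩
  · rintro ⟨p, rfl⟩
    exact hso p
  · obtain ⟨p, hp⟩ := hsurj ⟨x, hx⟩
    exact ⟨p, congrArg Subtype.val hp⟩
  · have hfalse : D a o = s (a, false) := rfl
    have htrue : D a (D a o) = s (a, true) := rfl
    simp only [Set.mem_insert_iff, Set.mem_singleton_iff, hso, false_or]
    rw [htrue, hfalse, hinj.eq_iff, hinj.eq_iff]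
    rcases p with ⟨b, _ | _⟩ <;> simp

theorem isKirkmanReplication (hD : IsKirkmanTripleSystem D) :
    IsKirkmanReplication (Nat.card ι) := by
  classical
  obtain ⟨o⟩ : Nonempty V := (Nat.card_pos_iff.1 (by simp [hD.card_eq])).1
  obtain ⟨s, hs, hrange, hblock⟩ := hD.exists_star_coordinates o
  have hstep (a) (p : ι × Bool) (h : a ≠ p.1) : ∃ q : ι × Bool, a ≠ q.1 ∧ s q = D a (s p) := by
    have hp : D a (s p) ∉ ({o, D a o, D a (D a o)} : Set V) := by
      rwa [hD.apply_mem_block_iff, hblock, eq_comm]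
    obtain ⟨q, hq⟩ := (hrange (D a (s p))).2 fun h => hp (.inl h)
    rw [← hq, hblock, eq_comm] at hp
    exact ⟨q, hp, hq⟩
  choose! C hC hsC using hstep
  have hmove (a) {p q : ι × Bool} (hpq : p.1 ≠ q.1) (h : D a (s p) = s q) :
      (if a = p.1 then p else C a p) = q := by
    have hap : a ≠ p.1 := by
      rintro rfl
      have hq := (hblock p.1 p).2 rfl
      rw [← hD.apply_mem_block_iff, h, hblock] at hq
      exact hpq hq.symm
    rw [if_neg hap]
    exact hs (by rw [hsC a p hap, h])
  refine isKirkmanReplication_card.2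
    ⟨fun a p => if a = p.1 then p else C a p, fun a p => ?_, fun {a p} => ?_, fun {p q} hpq => ?_⟩
  · by_cases h : a = p.1
    · simp only [h, if_true]
    · have h₁ := hC a p h
      have h₂ := hC a _ h₁
      simp only [h, h₁, h₂, if_false]
      exact hs (by rw [hsC a _ h₂, hsC a _ h₁, hsC a p h, hD.cube_apply])
  · have hne (h : a ≠ p.1) : C a p ≠ p := fun hp =>
      hD.apply_ne a (s p) (by rw [← hsC a p h, hp])
    rw [SimpleGraph.top_adj]
    grind
  · obtain ⟨a, ha⟩ := hD.exists_links (s p) (s q) fun h => hpq.ne (congrArg Prod.fst (hs h))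
    exact ⟨a, ha.imp (hmove a hpq) (hmove a hpq.symm)⟩

end IsKirkmanTripleSystem

end Replication

/-! ### Recursive constructions -/

section Constructions

/-- The parallel classes of the affine plane of order three are its four directions. -/
theorem isKirkmanReplication_four : IsKirkmanReplication 4 := by
  let dir : Fin 4 → ZMod 3 × ZMod 3 := ![(0, 1), (1, 0), (1, 1), (1, 2)]
  have h : IsKirkmanTripleSystem fun a x => x + dir a :=
    ⟨by decide, by decide, by unfold Links; decide, by simp⟩
  simpa using h.isKirkmanReplication

/-- A Kirkman triple system of order 21 (Ray-Chaudhuri and Wilson). Multiplication by the cube root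
of unity `2` generates the squares `1, 2, 4`, so the class of `g` consists of the triples
`{(g + 2 ^ i * s, j)}` for squares `s`, `{(g + 2 ^ i * s, j + i)}` for non-squares `s`, and
`{(g, i)}`; the remaining three classes are developments of a single triple. -/
theorem isKirkmanReplication_ten : IsKirkmanReplication 10 := by
  let D : ZMod 7 ⊕ Fin 3 → ZMod 7 × ZMod 3 → ZMod 7 × ZMod 3 := Sum.elim
    (fun g p => (g + 2 * (p.1 - g), if p.1 - g ∈ [1, 2, 4] then p.2 else p.2 + 1))
    fun i p => (p.1 + 2 ^ (i.val + p.2.val), p.2 + 1)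
  have h : IsKirkmanTripleSystem D :=
    ⟨by decide +kernel, by decide +kernel, by unfold Links; decide +kernel, by simp⟩
  simpa using h.isKirkmanReplication

theorem HasKirkmanFrame.of_differences {A β : Type*} [AddCommGroup A] [Finite A]
    {G : SimpleGraph A} {D : β → Fin 4 → A}
    (hle : ∀ b i j, i ≠ j → ∀ a, G.Adj (D b i + a) (D b j + a))
    (hG : ∀ x y, G.Adj x y → ∃! t : β × Fin 4 × Fin 4, D t.1 t.2.2 - D t.1 t.2.1 = y - x) :
    HasKirkmanFrame G := by
  refine .of_blocks (B := fun t : β × A => Set.range fun i => D t.1 i + t.2) ?_ ?_ ?_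
  · rintro ⟨b, a⟩
    have hinj : Function.Injective fun i => D b i + a := fun i j h => by
      by_contra hij
      exact (hle b i j hij a).ne h
    rw [← Set.image_univ, Set.ncard_image_of_injective _ hinj, Set.ncard_univ, Nat.card_fin]
    exact isKirkmanReplication_four
  · rintro ⟨b, a⟩ - ⟨i, rfl⟩ - ⟨j, rfl⟩ hij
    exact hle b i j (fun h => hij (h ▸ rfl)) a
  · intro x y hxy
    obtain ⟨⟨b, i, j⟩, hij, huniq⟩ := hG x y hxy
    refine ⟨(b, x - D b i), ⟨⟨i, add_sub_cancel _ _⟩, j, ?_⟩, ?_⟩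
    · rw [sub_eq_sub_iff_add_eq_add] at hij
      dsimp only at hij ⊢
      rw [← add_sub_assoc, hij, add_sub_cancel_right]
    · rintro ⟨b', a⟩ ⟨⟨i', hx⟩, j', hy⟩
      obtain ⟨rfl, rfl, rfl⟩ : b' = b ∧ i' = i ∧ j' = j := by
        simpa using huniq (b', i', j') (by simp [← hx, ← hy])
      simp [← hx]

theorem HasKirkmanFrame.comap_fst_of_differences {A K β : Type*} [AddCommGroup A] [AddCommGroup K]
    [Finite A] [Finite K] (D : β → Fin 4 → A × K) (hD : ∀ b, Function.Injective fun i => (D b i).1)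
    (h : ∀ d : A × K, d.1 ≠ 0 → ∃! t : β × Fin 4 × Fin 4, D t.1 t.2.2 - D t.1 t.2.1 = d) :
    HasKirkmanFrame ((⊤ : SimpleGraph A).comap (Prod.fst : A × K → A)) := by
  refine .of_differences (D := D) (fun b i j hij a hadj => ?_)
    fun x y hxy => h (y - x) (sub_ne_zero.2 (Ne.symm hxy))
  exact hij (hD b (add_right_cancel hadj))

theorem hasKirkmanFrame_comap_fst_five_three :
    HasKirkmanFrame ((⊤ : SimpleGraph (ZMod 5)).comap (Prod.fst : ZMod 5 × ZMod 3 → ZMod 5)) := by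
  refine .comap_fst_of_differences (fun _ : Unit => ![(0, 0), (1, 1), (3, 0), (2, 1)])
    (by decide) ?_
  unfold ExistsUnique
  decide +kernel

theorem hasKirkmanFrame_comap_fst_nine_three :
    HasKirkmanFrame ((⊤ : SimpleGraph (ZMod 3 × ZMod 3)).comap
      (Prod.fst : (ZMod 3 × ZMod 3) × ZMod 3 → ZMod 3 × ZMod 3)) := by
  refine .comap_fst_of_differences (β := Fin 2)
    ![![((0, 0), 0), ((1, 0), 0), ((0, 1), 0), ((1, 1), 1)],
      ![((0, 0), 0), ((0, 1), 2), ((1, 2), 1), ((2, 2), 0)]]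
    (by unfold Function.Injective; decide) ?_
  simp only [ExistsUnique, Prod.exists, Prod.forall]
  decide +kernel

end Constructions

section Recursions

/-- The partition of `(X × K) ⊕ κ` into the groups `{x} × K` and one further group `κ`. -/
def groupOf {X K κ : Type*} : (X × K) ⊕ κ → Option X :=
  Sum.elim (some ∘ Prod.fst) fun _ => none

theorem ncard_preimage_groupOf_none {X K κ : Type*} :
    ((groupOf : (X × K) ⊕ κ → Option X) ⁻¹' {none}).ncard = Nat.card κ := by
  have h : (groupOf : (X × K) ⊕ κ → Option X) ⁻¹' {none} = Set.range Sum.inr := by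
    ext (p | k) <;> simp [groupOf]
  rw [h, ← Set.image_univ, Set.ncard_image_of_injective _ Sum.inr_injective, Set.ncard_univ]

theorem ncard_preimage_groupOf_some {X K κ : Type*} (x : X) :
    ((groupOf : (X × K) ⊕ κ → Option X) ⁻¹' {some x}).ncard = Nat.card K := by
  have h : (groupOf : (X × K) ⊕ κ → Option X) ⁻¹' {some x} = Set.range fun k => .inl (x, k) := by
    ext (⟨y, z⟩ | k) <;> simp [groupOf, eq_comm]
  have hinj : Function.Injective fun k => (.inl (x, k) : (X × K) ⊕ κ) :=
    Sum.inl_injective.comp (Prod.mk_right_injective x)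
  rw [h, ← Set.image_univ, Set.ncard_image_of_injective _ hinj, Set.ncard_univ]

theorem isKirkmanReplication_three_mul_card_of_comap_fst {X : Type*} [Finite X]
    (h : HasKirkmanFrame ((⊤ : SimpleGraph X).comap (Prod.fst : X × ZMod 3 → X))) :
    IsKirkmanReplication (3 * Nat.card X + 1) :=
  h.isKirkmanReplication_three_mul_card_add_one (π := id)
    fun i => by simpa using isKirkmanReplication_four

theorem isKirkmanReplication_nine_mul_card_of_comap_fst {X : Type*} [Finite X]
    (h : HasKirkmanFrame ((⊤ : SimpleGraph X).comap (Prod.fst : X × ZMod 3 → X))) :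
    IsKirkmanReplication (9 * Nat.card X + 1) := by
  have hcard : 9 * Nat.card X = 3 * Nat.card (X × ZMod 3) := by
    rw [Nat.card_prod, Nat.card_zmod]; ring
  rw [hcard]
  refine h.comap_fst_zmod_three.isKirkmanReplication_three_mul_card_add_one
    (π := Prod.fst) fun i => ?_
  have hfiber : (Prod.fst : X × ZMod 3 → X) ⁻¹' {i} = {i} ×ˢ Set.univ := by
    ext; simp
  rw [hfiber, Set.ncard_prod, Set.ncard_univ, Nat.card_zmod, Set.ncard_singleton]
  exact isKirkmanReplication_ten

theorem IsKirkmanReplication.three_mul_add_one {r : ℕ} (h : IsKirkmanReplication r) :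
    IsKirkmanReplication (3 * r + 1) := by
  simpa using isKirkmanReplication_three_mul_card_of_comap_fst h.comap_fst_zmod_three

theorem HasKirkmanFrame.of_sdiff {X : Type*} {G H : SimpleGraph X} (hle : G ≤ H)
    (hG : HasKirkmanFrame G) (hHG : HasKirkmanFrame (H \ G)) : HasKirkmanFrame H := by
  refine .of_decomposition (G := fun b : Bool => if b then G else H \ G) ?_ ?_ fun x y h => ?_
  · simp [hG, hHG]
  · simp [hle]
  · by_cases hxy : G.Adj x y <;> simp [ExistsUnique, hxy, h]

theorem mem_zmultiples_iff_of_addOrderOf_eq_three {A : Type*} [AddGroup A] {v d : A}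
    (hv : addOrderOf v = 3) : d ∈ AddSubgroup.zmultiples v ↔ d = 0 ∨ d = v ∨ d = -v := by
  classical
  have h2 : (2 : ℕ) • v = -v := by
    rw [eq_neg_iff_add_eq_zero, ← succ_nsmul, ← addOrderOf_dvd_iff_nsmul_eq_zero, hv]
  have hfin : IsOfFinAddOrder v := addOrderOf_pos_iff.1 (by omega)
  rw [hfin.mem_zmultiples_iff_mem_range_addOrderOf, hv]
  simp only [Finset.range_add_one, Finset.range_zero, Finset.image_insert, Finset.image_empty, h2,
    Finset.mem_insert, Finset.notMem_empty, or_false, one_nsmul, zero_nsmul]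
  tauto

/-- The blocks are the cosets of the line spanned by `v k`, completed by the point `k`. -/
theorem HasKirkmanFrame.of_cosets {A κ : Type*} [AddCommGroup A] [Finite A] [Finite κ]
    {H : SimpleGraph (A ⊕ κ)} {v : κ → A} (hv : ∀ k, addOrderOf (v k) = 3)
    (hle : ∀ k x, H.Adj (.inl x) (.inl (x + v k)))
    (hH : ∀ x y, H.Adj (.inl x) (.inl y) → ∃! k, y - x = v k ∨ y - x = -v k)
    (hinl : ∀ x k, H.Adj (.inl x) (.inr k)) (hinr : ∀ k k', ¬ H.Adj (.inr k) (.inr k')) :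
    HasKirkmanFrame H := by
  let B (b : Σ k, A ⧸ AddSubgroup.zmultiples (v k)) : Set (A ⊕ κ) :=
    insert (.inr b.1) (.inl '' ((↑) ⁻¹' {b.2}))
  have hBl (b) (x : A) : .inl x ∈ B b ↔ (x : A ⧸ AddSubgroup.zmultiples (v b.1)) = b.2 := by
    simp [B]
  have hBr (b k) : .inr k ∈ B b ↔ k = b.1 := by simp [B]
  have hmk (k : κ) (x y : A) : (x : A ⧸ AddSubgroup.zmultiples (v k)) = y ↔
      y - x = 0 ∨ y - x = v k ∨ y - x = -v k := by
    rw [QuotientAddGroup.eq, ← mem_zmultiples_iff_of_addOrderOf_eq_three (hv k), neg_add_eq_sub]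
  have hext (k : κ) (x : A) (b : Σ k, A ⧸ AddSubgroup.zmultiples (v k)) (hb : b.1 = k)
      (hx : (x : A ⧸ AddSubgroup.zmultiples (v b.1)) = b.2) : b = ⟨k, x⟩ := by
    subst hb
    exact Sigma.ext rfl (heq_of_eq hx.symm)
  refine .of_blocks (B := B) (fun b => ?_) (fun b p hp q hq hpq => ?_) fun p q hpq => ?_
  · rw [Set.ncard_insert_of_notMem (by simp), Set.ncard_image_of_injective _ Sum.inl_injective,
      ← Nat.card_coe_set_eq,
      Nat.card_congr (QuotientAddGroup.preimageMkEquivAddSubgroupProdSet _ _), Nat.card_prod,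
      Nat.card_zmultiples, hv]
    simpa using isKirkmanReplication_four
  · rcases p with x | k <;> rcases q with y | k' <;> simp only [hBl, hBr] at hp hq
    · obtain h | h | h := (hmk b.1 x y).1 (hp.trans hq.symm)
      · exact (hpq (by rw [sub_eq_zero.1 h])).elim
      · simpa [← h] using hle b.1 x
      · rw [← neg_eq_iff_eq_neg, neg_sub] at h
        simpa [← h] using (hle b.1 y).symm
    · exact hinl _ _
    · exact (hinl _ _).symm
    · exact (hpq (by rw [hp, hq])).elim
  · rcases p with x | k <;> rcases q with y | k' <;> simp only [hBl, hBr]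
    · obtain ⟨k, hk, huniq⟩ := hH x y hpq
      have hyx : y - x ≠ 0 := fun h => hpq.ne (by rw [sub_eq_zero.1 h])
      refine ⟨⟨k, x⟩, ⟨rfl, ((hmk k x y).2 (.inr hk)).symm⟩, fun b hb => ?_⟩
      have hb' := ((hmk b.1 x y).1 (hb.1.trans hb.2.symm)).resolve_left hyx
      exact hext k x b (huniq _ hb') hb.1
    · exact ⟨⟨k', x⟩, ⟨rfl, rfl⟩, fun b hb => hext k' x b hb.2.symm hb.1⟩
    · exact ⟨⟨k, y⟩, ⟨rfl, rfl⟩, fun b hb => hext k y b hb.1.symm hb.2⟩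
    · exact (hinr _ _ hpq).elim

theorem circulantGraph_differences_adj {A ι : Type*} [AddGroup A] {D : ι → A}
    (hD : Function.Injective D) {x y : A} :
    (SimpleGraph.circulantGraph {d | ∃ i j, D j - D i = d}).Adj x y ↔
      ∃ i j, i ≠ j ∧ D j - D i = y - x := by
  simp only [SimpleGraph.circulantGraph_adj, Set.mem_ofPred_eq]
  constructor
  · rintro ⟨hxy, ⟨i, j, hd⟩ | ⟨i, j, hd⟩⟩
    · refine ⟨j, i, ?_, by rw [← neg_sub, hd, neg_sub]⟩
      rintro rfl
      exact hxy (sub_eq_zero.1 (hd.symm.trans (sub_self _)))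
    · refine ⟨i, j, ?_, hd⟩
      rintro rfl
      exact hxy (sub_eq_zero.1 (hd.symm.trans (sub_self _))).symm
  · rintro ⟨i, j, hij, hd⟩
    refine ⟨?_, .inr ⟨i, j, hd⟩⟩
    rintro rfl
    exact hij (hD (sub_eq_zero.1 (hd.trans (sub_self _)))).symm

/-- The differences not covered by `D` form lines, whose parallel classes are completed by the
points of an additional group `κ`. -/
theorem HasKirkmanFrame.of_differences_lines {A K κ : Type*} [AddCommGroup A] [AddCommGroup K]
    [Finite A] [Finite K] [Finite κ] {D : Fin 4 → A × K} {v : κ → A × K}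
    (hD : Function.Injective fun i => (D i).1) (hv : ∀ k, addOrderOf (v k) = 3)
    (hv₀ : ∀ k, (v k).1 ≠ 0) (hDv : ∀ k i j, D j - D i ≠ v k)
    (h : ∀ d : A × K, d.1 ≠ 0 →
      (∃! t : Fin 4 × Fin 4, D t.2 - D t.1 = d) ∨ ∃! k, d = v k ∨ d = -v k) :
    HasKirkmanFrame ((⊤ : SimpleGraph (Option A)).comap (groupOf : (A × K) ⊕ κ → Option A)) := by
  let G := SimpleGraph.circulantGraph {d | ∃ i j, D j - D i = d}
  have hadj {x y} : G.Adj x y ↔ ∃ i j, i ≠ j ∧ D j - D i = y - x :=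
    circulantGraph_differences_adj (Function.Injective.of_comp (f := Prod.fst) hD)
  have hfst {x y} (hxy : G.Adj x y) : x.1 ≠ y.1 := by
    obtain ⟨i, j, hij, heq⟩ := hadj.1 hxy
    intro hfst
    exact hij (hD (sub_eq_zero.1 (by simpa [hfst] using congrArg Prod.fst heq)).symm)
  have hmap {x y} :
      (G.map Sum.inl : SimpleGraph ((A × K) ⊕ κ)).Adj (.inl x) (.inl y) ↔ G.Adj x y :=
    SimpleGraph.map_adj_apply (f := Function.Embedding.inl)
  have hG : HasKirkmanFrame G := by
    refine .of_differences (D := fun _ : Unit => D) (fun _ i j hij a => ?_) fun x y hxy => ?_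
    · exact hadj.2 ⟨i, j, hij, by simp⟩
    · obtain ⟨i, j, -, hd⟩ := hadj.1 hxy
      obtain ⟨t, ht, huniq⟩ | ⟨k, hk | hk, -⟩ := h (y - x) (sub_ne_zero.2 (hfst hxy).symm)
      · exact ⟨((), t), ht, fun t' ht' => Prod.ext rfl (huniq _ ht')⟩
      · exact (hDv k i j (hd.trans hk)).elim
      · exact (hDv k j i (by rw [← neg_sub, hd, hk, neg_neg])).elim
  refine (hG.map Sum.inl_injective).of_sdiff ?_ (.of_cosets hv (fun k x => ?_)
    (fun x y hxy => ?_) (fun x k => ?_) fun k k' hkk' => ?_)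
  · rintro _ _ ⟨-, x, y, hxy, rfl, rfl⟩
    exact (Option.some_injective A).ne (hfst hxy)
  · rw [SimpleGraph.sdiff_adj, hmap, hadj]
    refine ⟨(Option.some_injective A).ne (by simpa using hv₀ k), ?_⟩
    rintro ⟨i, j, -, hd⟩
    exact hDv k i j (by rw [hd, add_sub_cancel_left])
  · rw [SimpleGraph.sdiff_adj, hmap, hadj] at hxy
    have hne : (y - x).1 ≠ 0 := sub_ne_zero.2 fun heq => hxy.1 (congrArg some heq.symm)
    refine (h _ hne).resolve_left fun ⟨t, ht, _⟩ => hxy.2 ⟨t.1, t.2, fun ht' => hne ?_, ht⟩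
    rw [← ht, ht', sub_self, Prod.fst_zero]
  · refine (SimpleGraph.sdiff_adj _ _ _ _).2 ⟨Option.some_ne_none _, ?_⟩
    rintro ⟨-, y, z, -, -, hz⟩
    exact Sum.inl_ne_inr hz
  · exact ((SimpleGraph.sdiff_adj _ _ _ _).1 hkk').1 rfl

end Recursions

/-! ### Kirkman frames over finite fields -/

section FiniteFields

/-- The parallel classes are the translates of a single one. -/
theorem hasKirkmanFrame_top_of_starter {A : Type*} [AddGroup A] {R : A × Bool → A × Bool}
    (hR : ∀ p, R (R (R p)) = p) (hR₀ : ∀ p, R p = p ↔ p.1 = 0)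
    (h : ∀ d b b', d ≠ 0 → ∃ s, R (s, b) = (d + s, b') ∨ R (d + s, b') = (s, b)) :
    HasKirkmanFrame (⊤ : SimpleGraph A) := by
  let T (g : A) : A × Bool ≃ A × Bool := (Equiv.addRight g).prodCongr (Equiv.refl Bool)
  have hT (g p) : (T g).symm p = (p.1 - g, p.2) := Prod.ext (sub_eq_add_neg _ _).symm rfl
  refine ⟨fun g p => T g (R ((T g).symm p)), fun g p => ?_, fun {g p} => ?_, fun {p q} hpq => ?_⟩
  · simp only [Equiv.symm_apply_apply, hR, Equiv.apply_symm_apply]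
  · rw [← Equiv.eq_symm_apply, hR₀, hT, SimpleGraph.top_adj, not_not, sub_eq_zero, eq_comm]
  · obtain ⟨s, hs⟩ := h (q.1 - p.1) p.2 q.2 (sub_ne_zero.2 hpq.ne')
    refine ⟨-s + p.1, ?_⟩
    simpa only [Links, ← Equiv.eq_symm_apply, hT, sub_eq_add_neg, neg_add_rev, neg_neg, add_assoc,
      add_neg_cancel_left] using hs

theorem exists_half_system {F : Type*} [Field F] (h2 : (2 : F) ≠ 0) {ω : F} (hω : ω ^ 3 = 1) :
    ∃ E : F → Prop, (∀ s, E (ω * s) ↔ E s) ∧ ∀ s, s ≠ 0 → (E (-s) ↔ ¬ E s) := by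
  refine ⟨fun s => WellOrderingRel (s ^ 3) (-s ^ 3), fun s => by simp [mul_pow, hω], fun s hs => ?_⟩
  have hne : s ^ 3 ≠ -s ^ 3 := by
    rw [ne_eq, eq_neg_iff_add_eq_zero, ← two_mul]
    exact mul_ne_zero h2 (pow_ne_zero 3 hs)
  dsimp only
  rw [Odd.neg_pow (by decide), neg_neg]
  exact ⟨asymm, fun h => ((trichotomous_of WellOrderingRel (s ^ 3) (-s ^ 3)).resolve_left
    h).resolve_left hne⟩

section Starter

variable {F : Type*} [Field F] {ω η : F} {E : F → Prop}

open Classical in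
/-- Ray-Chaudhuri and Wilson's starter on two copies of the field `F`. Up to scaling by `η` in the
second copy, its cycles are `(s, 0), (-ω ^ 2 * s, 0), (s, 1)` for `s ∈ E` and
`(s, 1), (ω * s, 1), (ω ^ 2 * s, 1)` for `s ∉ E`. -/
noncomputable def kirkmanStarter (ω η : F) (E : F → Prop) (p : F × Bool) : F × Bool :=
  if p.1 = 0 then p
  else if p.2 then
    if E (η⁻¹ * p.1) then (η⁻¹ * p.1, false) else (ω * p.1, true)
  else if E p.1 then (-(ω * (ω * p.1)), false) else (η * -(ω * p.1), true)

theorem kirkmanStarter_zero {b : Bool} : kirkmanStarter ω η E (0, b) = (0, b) :=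
  if_pos rfl

theorem kirkmanStarter_false_of_mem {s : F} (hs : s ≠ 0) (h : E s) :
    kirkmanStarter ω η E (s, false) = (-(ω * (ω * s)), false) := by
  simp [kirkmanStarter, hs, h]

theorem kirkmanStarter_false_of_notMem {s : F} (hs : s ≠ 0) (h : ¬ E s) :
    kirkmanStarter ω η E (s, false) = (η * -(ω * s), true) := by
  simp [kirkmanStarter, hs, h]

theorem kirkmanStarter_true_of_mem {s : F} (hη : η ≠ 0) (hs : s ≠ 0) (h : E s) :
    kirkmanStarter ω η E (η * s, true) = (s, false) := by
  simp [kirkmanStarter, hη, hs, h]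

theorem kirkmanStarter_true_of_notMem {s : F} (hη : η ≠ 0) (hs : s ≠ 0) (h : ¬ E s) :
    kirkmanStarter ω η E (η * s, true) = (η * (ω * s), true) := by
  simp [kirkmanStarter, hη, hs, h, mul_left_comm]

theorem kirkmanStarter_eq_self_iff (hω : ω ^ 2 + ω + 1 = 0) (hω₁ : ω ≠ 1) (hη : η ≠ 0)
    {p : F × Bool} : kirkmanStarter ω η E p = p ↔ p.1 = 0 := by
  have hω₀ : ω ≠ 0 := by rintro rfl; simp at hω
  obtain ⟨t, b⟩ := p
  refine ⟨fun h => ?_, fun h => if_pos h⟩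
  by_contra ht
  replace ht : t ≠ 0 := ht
  cases b with
  | false =>
    by_cases hE : E t
    · rw [kirkmanStarter_false_of_mem ht hE] at h
      refine mul_ne_zero hω₀ ht ?_
      linear_combination t * hω + congrArg Prod.fst h
    · simp [kirkmanStarter_false_of_notMem ht hE] at h
  | true =>
    obtain ⟨s, rfl⟩ : ∃ s, t = η * s := ⟨_, (mul_inv_cancel_left₀ hη t).symm⟩
    have hs := right_ne_zero_of_mul ht
    by_cases hE : E s
    · simp [kirkmanStarter_true_of_mem hη hs hE] at h
    · simp [kirkmanStarter_true_of_notMem hη hs hE, hη, hs, hω₁] at h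

variable (hE : ∀ s, E (ω * s) ↔ E s) (hE' : ∀ s, s ≠ 0 → (E (-s) ↔ ¬ E s))

include hE hE'

theorem kirkmanStarter_iterate_three (hω : ω ^ 3 = 1) (hη : η ≠ 0) (p : F × Bool) :
    kirkmanStarter ω η E (kirkmanStarter ω η E (kirkmanStarter ω η E p)) = p := by
  have hωs (s : F) : ω * (ω * (ω * s)) = s := by linear_combination s * hω
  have hω₀ : ω ≠ 0 := by rintro rfl; simp at hω
  have hω₀' {s : F} (hs : s ≠ 0) : ω * s ≠ 0 := mul_ne_zero hω₀ hs
  have hstep {s : F} (hs : s ≠ 0) (h : E s) :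
      kirkmanStarter ω η E (-(ω * (ω * s)), false) = (η * s, true) := by
    have hs' : ω * (ω * s) ≠ 0 := hω₀' (hω₀' hs)
    rw [kirkmanStarter_false_of_notMem (neg_ne_zero.2 hs') (by simpa [hE' _ hs', hE] using h),
      mul_neg ω, neg_neg, hωs]
  rcases eq_or_ne p.1 0 with hp | hp
  · obtain ⟨t, b⟩ := p
    obtain rfl : t = 0 := hp
    simp only [kirkmanStarter_zero]
  obtain ⟨s, rfl | rfl⟩ : ∃ s, p = (s, false) ∨ p = (η * s, true) := by
    obtain ⟨t, _ | _⟩ := p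
    exacts [⟨t, .inl rfl⟩, ⟨η⁻¹ * t, .inr (by rw [mul_inv_cancel_left₀ hη])⟩]
  · by_cases h : E s
    · rw [kirkmanStarter_false_of_mem hp h, hstep hp h, kirkmanStarter_true_of_mem hη hp h]
    · have hu : -(ω * s) ≠ 0 := neg_ne_zero.2 (hω₀' hp)
      have hEu : E (-(ω * s)) := (hE' _ (hω₀' hp)).2 (by rwa [hE])
      rw [kirkmanStarter_false_of_notMem hp h, kirkmanStarter_true_of_mem hη hu hEu,
        kirkmanStarter_false_of_mem hu hEu, mul_neg, mul_neg, neg_neg, hωs]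
  · have hs : s ≠ 0 := right_ne_zero_of_mul hp
    by_cases h : E s
    · rw [kirkmanStarter_true_of_mem hη hs h, kirkmanStarter_false_of_mem hs h, hstep hs h]
    · have h₁ : ¬ E (ω * s) := by rwa [hE]
      rw [kirkmanStarter_true_of_notMem hη hs h, kirkmanStarter_true_of_notMem hη (hω₀' hs) h₁,
        kirkmanStarter_true_of_notMem hη (hω₀' (hω₀' hs)) (by rwa [hE]), hωs]

/-- Every displacement `d` occurs in exactly one of the two directions. -/
theorem exists_kirkmanStarter_eq (h2 : (2 : F) ≠ 0) (hω : ω ^ 2 + ω + 1 = 0) (hω₁ : ω ≠ 1)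
    (hη : η ≠ 0) (hηω : 2 * η = 2 + ω) {d : F} (hd : d ≠ 0) (b b' : Bool) :
    ∃ s, kirkmanStarter ω η E (s, b) = (d + s, b') ∨ kirkmanStarter ω η E (d + s, b') = (s, b) := by
  have hω₀ : ω ≠ 0 := by rintro rfl; simp at hω
  let Q (b b' : Bool) (d : F) : Prop := ∃ s, kirkmanStarter ω η E (s, b) = (d + s, b')
  suffices Q b b' d ∨ Q b' b (-d) by
    obtain ⟨s, hs⟩ | ⟨s, hs⟩ := this
    exacts [⟨s, .inl hs⟩, ⟨-d + s, .inr (by simpa using hs)⟩]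
  have hff {d : F} (hd : d ≠ 0) (h : E d) : Q false false d := by
    refine ⟨ω * (ω * d), ?_⟩
    rw [kirkmanStarter_false_of_mem (by simp [hω₀, hd]) (by simpa only [hE])]
    congr 1
    linear_combination (-d * (ω ^ 2 - ω + 1)) * hω
  have htt {s : F} (hs : s ≠ 0) (h : ¬ E s) : Q true true (η * (ω - 1) * s) := by
    refine ⟨η * s, ?_⟩
    rw [kirkmanStarter_true_of_notMem hη hs h]
    congr 1
    ring
  have hft {d : F} (hd : d ≠ 0) (h : ¬ E (2 * d)) : Q false true d := by
    refine ⟨ω * (2 * d), ?_⟩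
    rw [kirkmanStarter_false_of_notMem (by simp [hω₀, h2, hd]) (by simpa only [hE])]
    congr 1
    linear_combination (-ω ^ 2 * d) * hηω - d * (ω + 1) * hω
  have htf {d : F} (hd : d ≠ 0) (h : E (2 * -d)) : Q true false d := by
    refine ⟨η * (ω * (ω * (2 * -d))), ?_⟩
    rw [kirkmanStarter_true_of_mem hη (by simp [hω₀, h2, hd]) (by simpa only [hE])]
    congr 1
    linear_combination (ω ^ 2 * d) * hηω + d * (ω - 1) * hω
  have h2d : 2 * d ≠ 0 := mul_ne_zero h2 hd
  have hd' : -d ≠ 0 := neg_ne_zero.2 hd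
  match b, b' with
  | false, false => exact (em (E d)).imp (hff hd) fun h => hff hd' ((hE' d hd).2 h)
  | true, true =>
    have hc : η * (ω - 1) ≠ 0 := mul_ne_zero hη (sub_ne_zero.2 hω₁)
    obtain ⟨s, rfl⟩ : ∃ s, d = η * (ω - 1) * s := ⟨_, (mul_inv_cancel_left₀ hc d).symm⟩
    have hs : s ≠ 0 := right_ne_zero_of_mul hd
    rw [← mul_neg]
    exact (em' (E s)).imp (htt hs) fun h => htt (neg_ne_zero.2 hs) (by rwa [hE' s hs, not_not])
  | false, true => exact (em' (E (2 * d))).imp (hft hd) fun h => htf hd' (by rwa [neg_neg])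
  | true, false => exact (em (E (2 * -d))).imp (htf hd) (hft hd')

end Starter

theorem hasKirkmanFrame_top_of_field {F : Type*} [Field F] (h2 : (2 : F) ≠ 0) (h3 : (3 : F) ≠ 0)
    {ω : F} (hω : ω ^ 2 + ω + 1 = 0) : HasKirkmanFrame (⊤ : SimpleGraph F) := by
  have hω3 : ω ^ 3 = 1 := by linear_combination (ω - 1) * hω
  have hω₁ : ω ≠ 1 := by
    rintro rfl
    exact h3 (by linear_combination hω)
  have hηω : 2 * ((2 + ω) / 2) = 2 + ω := mul_div_cancel₀ _ h2
  have hη : (2 + ω) / 2 ≠ 0 := by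
    refine div_ne_zero (fun h => h3 ?_) h2
    linear_combination (1 - ω) * h + hω
  obtain ⟨E, hE, hE'⟩ := exists_half_system h2 hω3
  exact hasKirkmanFrame_top_of_starter (kirkmanStarter_iterate_three hE hE' hω3 hη)
    (fun _ => kirkmanStarter_eq_self_iff hω hω₁ hη)
    fun _ b b' hd => exists_kirkmanStarter_eq hE hE' h2 hω hω₁ hη hηω hd b b'

theorem isKirkmanReplication_card_field (F : Type*) [Field F] [Finite F]
    (h : Nat.card F % 6 = 1) : IsKirkmanReplication (Nat.card F) := by
  have := Fintype.ofFinite F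
  obtain ⟨t, ht⟩ : ∃ t, Nat.card F = 6 * t + 1 := ⟨Nat.card F / 6, by lia⟩
  have h6 : (6 : F) * t + 1 = 0 := by
    exact_mod_cast ht ▸ Nat.card_eq_fintype_card (α := F) ▸ Nat.cast_card_eq_zero F
  have h2 : (2 : F) ≠ 0 := fun h => one_ne_zero (α := F) (by linear_combination h6 - 3 * t * h)
  have h3 : (3 : F) ≠ 0 := fun h => one_ne_zero (α := F) (by linear_combination h6 - 2 * t * h)
  obtain ⟨u, hu⟩ : ∃ u : Fˣ, orderOf u = 3 :=
    exists_prime_orderOf_dvd_card' 3 (by rw [Nat.card_units, ht]; exact ⟨2 * t, by lia⟩)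
  obtain ⟨hu3, hu1⟩ := orderOf_eq_prime_iff.1 hu
  have hu3' : (u : F) ^ 3 = 1 := by rw [← Units.val_pow_eq_pow_val, hu3, Units.val_one]
  have hω : (u : F) ^ 2 + u + 1 = 0 := by
    refine (mul_eq_zero_iff_left (sub_ne_zero.2 (Units.val_eq_one.not.2 hu1))).1 ?_
    linear_combination hu3'
  rw [isKirkmanReplication_card]
  exact hasKirkmanFrame_top_of_field h2 h3 hω

theorem exists_field_card_eq {q : ℕ} (hq : IsPrimePow q) :
    ∃ (F : Type) (_ : Field F), Nat.card F = q := by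
  rw [← Fintype.card_fin q, ← Fintype.nonempty_field_iff] at hq
  exact ⟨Fin q, hq.some, Nat.card_fin q⟩

theorem isKirkmanReplication_of_isPrimePow {q : ℕ} (hq : IsPrimePow q) (h : q % 6 = 1) :
    IsKirkmanReplication q := by
  obtain ⟨F, _, rfl⟩ := exists_field_card_eq hq
  have : Finite F := Nat.finite_of_card_ne_zero (by omega)
  exact isKirkmanReplication_card_field F h

end FiniteFields

/-! ### Truncated transversal designs -/

section TransversalDesigns

theorem HasKirkmanFrame.comap_fst_of_blocks {X K β : Type*} {H : SimpleGraph X} {B : β → Set X}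
    (hB : ∀ b, HasKirkmanFrame ((⊤ : SimpleGraph (B b)).comap (Prod.fst : B b × K → B b)))
    (hle : ∀ b, (B b).Pairwise H.Adj) (hH : ∀ x y, H.Adj x y → ∃! b, x ∈ B b ∧ y ∈ B b) :
    HasKirkmanFrame (H.comap (Prod.fst : X × K → X)) := by
  have hinj (b) : Function.Injective (Prod.map Subtype.val id : B b × K → X × K) :=
    Subtype.val_injective.prodMap Function.injective_id
  have hadj (b) (p q : X × K) :
      (((⊤ : SimpleGraph (B b)).comap Prod.fst).map (Prod.map Subtype.val id : B b × K → X × K)).Adj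
        p q ↔ (p.1 ∈ B b ∧ q.1 ∈ B b) ∧ p.1 ≠ q.1 := by
    constructor
    · rintro ⟨-, p, q, hpq, rfl, rfl⟩
      exact ⟨⟨p.1.2, q.1.2⟩, Subtype.coe_ne_coe.2 hpq⟩
    · rintro ⟨⟨hp, hq⟩, hpq⟩
      exact ⟨fun h => hpq (congrArg Prod.fst h), (⟨p.1, hp⟩, p.2), (⟨q.1, hq⟩, q.2),
        fun h => hpq (congrArg Subtype.val h), rfl, rfl⟩
  refine .of_decomposition (fun b => (hB b).map (hinj b)) (fun b p q h => ?_) fun p q h => ?_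
  · obtain ⟨⟨hp, hq⟩, hpq⟩ := (hadj b p q).1 h
    exact hle b hp hq hpq
  · have hpq : p.1 ≠ q.1 := SimpleGraph.Adj.ne (G := H) h
    simpa only [hadj, hpq, ne_eq, not_false_eq_true, and_true] using hH p.1 q.1 h

theorem HasKirkmanFrame.comap_fst_of_equiv {X Y K : Type*} (e : X ≃ Y)
    (h : HasKirkmanFrame ((⊤ : SimpleGraph X).comap (Prod.fst : X × K → X))) :
    HasKirkmanFrame ((⊤ : SimpleGraph Y).comap (Prod.fst : Y × K → Y)) :=
  h.of_iso (G := (⊤ : SimpleGraph X).comap (Prod.fst : X × K → X))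
    ⟨e.prodCongr (Equiv.refl K), fun {_ _} => e.injective.ne_iff⟩

variable {R : Type*} [CommRing R] {T : Set R} {a : Fin 4 → R}

/-- The block of the truncated transversal design through the point `z` of the group `i` whenever
`z = x + a i * y`; the points of the fifth group are restricted to `T`. -/
def transversalBlock (a : Fin 4 → R) (T : Set R) (b : R × R) : Set ((Fin 4 × R) ⊕ T) :=
  {p | Sum.elim (fun z => z.2 = b.1 + a z.1 * b.2) (fun t : T => (t : R) = b.2) p}

theorem ncard_transversalBlock (b : R × R) :
    (transversalBlock a T b).ncard = 4 ∨ (transversalBlock a T b).ncard = 5 := by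
  let f (i : Fin 4) : (Fin 4 × R) ⊕ T := .inl (i, b.1 + a i * b.2)
  have hf : (Set.range f).ncard = 4 := by
    have hinj : f.Injective := fun i j h => congrArg Prod.fst (Sum.inl_injective h)
    rw [← Set.image_univ, Set.ncard_image_of_injective _ hinj, Set.ncard_univ, Nat.card_fin]
  by_cases hb : b.2 ∈ T
  · have hblock : transversalBlock a T b = insert (.inr ⟨b.2, hb⟩) (Set.range f) := by
      ext (⟨i, z⟩ | t) <;> simp [transversalBlock, f, eq_comm, Subtype.ext_iff]
    right
    rw [hblock, Set.ncard_insert_of_notMem (by simp [f]) (Set.finite_range f), hf]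
  · have hblock : transversalBlock a T b = Set.range f := by
      ext (⟨i, z⟩ | t)
      · simp [transversalBlock, f, eq_comm]
      · simpa [transversalBlock, f] using ne_of_mem_of_not_mem t.2 hb
    left
    rw [hblock, hf]

theorem injOn_groupOf (b : R × R) :
    Set.InjOn groupOf (transversalBlock a T b) := by
  rintro (⟨i, z⟩ | t) hp (⟨j, z'⟩ | t') hq h
  · obtain rfl : i = j := Option.some_injective _ h
    exact congrArg (fun z => Sum.inl (i, z)) (hp.trans hq.symm)
  · exact (Option.some_ne_none i h).elim
  · exact (Option.some_ne_none j h.symm).elim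
  · exact congrArg Sum.inr (Subtype.ext (hp.trans hq.symm))

theorem existsUnique_transversalBlock (ha : Pairwise fun i j => IsUnit (a i - a j))
    {p q : (Fin 4 × R) ⊕ T} (hpq : groupOf p ≠ groupOf q) :
    ∃! b, p ∈ transversalBlock a T b ∧ q ∈ transversalBlock a T b := by
  have hmix (i z) (t : T) : ∃! b, .inl (i, z) ∈ transversalBlock a T b ∧
      .inr t ∈ transversalBlock a T b := by
    refine ⟨(z - a i * t, t), ⟨(sub_add_cancel _ _).symm, rfl⟩, ?_⟩
    rintro ⟨x, y⟩ ⟨hz, ht⟩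
    obtain rfl : z = x + a i * y := hz
    obtain rfl : (t : R) = y := ht
    rw [add_sub_cancel_right]
  obtain ⟨i, z⟩ | t := p <;> obtain ⟨j, z'⟩ | t' := q
  · obtain ⟨u, hu⟩ := @ha i j (by simpa [groupOf] using hpq)
    refine ⟨(z - a i * (↑u⁻¹ * (z - z')), ↑u⁻¹ * (z - z')), ⟨?_, ?_⟩, ?_⟩
    · exact (sub_add_cancel _ _).symm
    · change z' = z - a i * (↑u⁻¹ * (z - z')) + a j * (↑u⁻¹ * (z - z'))
      linear_combination (z - z') * u.mul_inv - ↑u⁻¹ * (z - z') * hu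
    · rintro ⟨x, y⟩ ⟨hz, hz'⟩
      obtain rfl : z = x + a i * y := hz
      obtain rfl : z' = x + a j * y := hz'
      have hy : ↑u⁻¹ * (x + a i * y - (x + a j * y)) = y := by
        linear_combination y * u.inv_mul - ↑u⁻¹ * y * hu
      rw [hy, add_sub_cancel_right]
  · exact hmix i z t'
  · simpa only [and_comm] using hmix j z' t
  · exact (hpq rfl).elim

theorem hasKirkmanFrame_comap_fst_of_card {X : Type*} (h : Nat.card X = 4 ∨ Nat.card X = 5) :
    HasKirkmanFrame ((⊤ : SimpleGraph X).comap (Prod.fst : X × ZMod 3 → X)) := by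
  have : Finite X := Nat.finite_of_card_ne_zero (by omega)
  obtain h | h := h
  · refine HasKirkmanFrame.comap_fst_zmod_three ?_
    rw [← isKirkmanReplication_card, h]
    exact isKirkmanReplication_four
  · refine hasKirkmanFrame_comap_fst_five_three.comap_fst_of_equiv (Finite.equivFinOfCardEq h).symm

theorem HasKirkmanFrame.comap_groupOf (ha : Pairwise fun i j => IsUnit (a i - a j)) :
    HasKirkmanFrame ((⊤ : SimpleGraph (Option (Fin 4))).comap
      (groupOf ∘ Prod.fst : ((Fin 4 × R) ⊕ T) × ZMod 3 → Option (Fin 4))) := by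
  refine HasKirkmanFrame.comap_fst_of_blocks
    (H := (⊤ : SimpleGraph (Option (Fin 4))).comap (groupOf : (Fin 4 × R) ⊕ T → Option (Fin 4)))
    (fun b => hasKirkmanFrame_comap_fst_of_card (ncard_transversalBlock b))
    (fun b p hp q hq hpq => ?_) fun p q hpq => existsUnique_transversalBlock ha hpq
  exact (injOn_groupOf b).ne hp hq hpq

theorem IsKirkmanReplication.of_transversal [Finite R] (ha : Pairwise fun i j => IsUnit (a i - a j))
    {t : ℕ} (ht : t ≤ Nat.card R) (hR : IsKirkmanReplication (3 * Nat.card R + 1))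
    (h : IsKirkmanReplication (3 * t + 1)) :
    IsKirkmanReplication (3 * (4 * Nat.card R + t) + 1) := by
  obtain ⟨T, -, hT⟩ := Set.exists_subset_card_eq (s := (Set.univ : Set R)) (n := t)
    (by rwa [Set.ncard_univ])
  have hcard : Nat.card ((Fin 4 × R) ⊕ T) = 4 * Nat.card R + t := by
    simp [hT]
  rw [← hcard]
  refine (HasKirkmanFrame.comap_groupOf (T := T) ha).isKirkmanReplication_three_mul_card_add_one
    fun o => ?_
  obtain _ | i := o
  · rwa [ncard_preimage_groupOf_none, Nat.card_coe_set_eq, hT]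
  · rwa [ncard_preimage_groupOf_some]

theorem IsKirkmanReplication.of_coprime_six {n t : ℕ} (hn : n.Coprime 6) (ht : t ≤ n)
    (hn' : IsKirkmanReplication (3 * n + 1)) (h : IsKirkmanReplication (3 * t + 1)) :
    IsKirkmanReplication (3 * (4 * n + t) + 1) := by
  have hn₀ : NeZero n := ⟨by rintro rfl; simp at hn⟩
  have h6 : IsUnit ((6 : ℕ) : ZMod n) := (ZMod.isUnit_iff_coprime 6 n).2 hn.symm
  have ha : Pairwise fun i j : Fin 4 => IsUnit ((i.val : ZMod n) - j.val) := fun i j hij => by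
    have hdvd : (i.val - j.val : ℤ) ∣ 6 := by revert i j; decide
    exact isUnit_of_dvd_unit (by simpa using map_dvd (Int.castRingHom (ZMod n)) hdvd) h6
  rw [← Nat.card_zmod n] at ht hn' ⊢
  exact .of_transversal ha ht hn' h

theorem IsKirkmanReplication.of_isPrimePow {q t : ℕ} (hq : IsPrimePow q) (h4 : 4 ≤ q) (ht : t ≤ q)
    (hq' : IsKirkmanReplication (3 * q + 1)) (h : IsKirkmanReplication (3 * t + 1)) :
    IsKirkmanReplication (3 * (4 * q + t) + 1) := by
  obtain ⟨F, _, rfl⟩ := exists_field_card_eq hq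
  have : Finite F := Nat.finite_of_card_ne_zero (by omega)
  let a : Fin 4 → F := (Finite.equivFin F).symm ∘ Fin.castLE h4
  have ha_inj : Function.Injective a :=
    (Finite.equivFin F).symm.injective.comp (Fin.castLE_injective h4)
  have ha : Pairwise fun i j => IsUnit (a i - a j) := fun i j hij =>
    (sub_ne_zero.2 (ha_inj.ne hij)).isUnit
  exact .of_transversal ha ht hq' h

theorem isKirkmanReplication_thirty_four : IsKirkmanReplication 34 := by
  have h := HasKirkmanFrame.of_differences_lines (A := ZMod 3 × ZMod 3) (K := ZMod 3)
    (D := ![((0, 0), 0), ((1, 0), 0), ((0, 1), 0), ((2, 2), 1)])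
    (v := ![((1, 1), 0), ((0, 2), 1), ((2, 0), 1), ((2, 2), 2), ((0, 1), 1), ((1, 0), 1)])
    (by unfold Function.Injective; decide)
    (fun k => addOrderOf_eq_prime (by revert k; decide) (by revert k; decide)) (by decide)
    (by decide) (by unfold ExistsUnique; decide +kernel)
  suffices IsKirkmanReplication (Nat.card (((ZMod 3 × ZMod 3) × ZMod 3) ⊕ Fin 6) + 1) by
    simpa using this
  refine h.isKirkmanReplication_card_add_one fun o => ?_
  obtain _ | i := o
  · rw [ncard_preimage_groupOf_none, Nat.card_fin]
    exact isKirkmanReplication_of_isPrimePow (Nat.Prime.isPrimePow (by norm_num)) rfl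
  · rw [ncard_preimage_groupOf_some, Nat.card_zmod]
    exact isKirkmanReplication_four

theorem isKirkmanReplication_of_lt_sixteen {u : ℕ} (hu : u < 16) :
    IsKirkmanReplication (3 * u + 1) := by
  have hprime {p : ℕ} (hp : p.Prime) (h : p % 6 = 1) : IsKirkmanReplication p :=
    isKirkmanReplication_of_isPrimePow hp.isPrimePow h
  have h4 := isKirkmanReplication_four
  have h10 := isKirkmanReplication_ten
  have h7 : IsKirkmanReplication 7 := hprime (by norm_num) rfl
  have h5 := hasKirkmanFrame_comap_fst_five_three
  interval_cases u
  · exact isKirkmanReplication_one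
  · exact h4
  · exact h7
  · exact h10
  · exact h4.three_mul_add_one
  · simpa using isKirkmanReplication_three_mul_card_of_comap_fst h5
  · exact hprime (by norm_num) rfl
  · exact h7.three_mul_add_one
  · exact isKirkmanReplication_of_isPrimePow
      ((Nat.prime_five.isPrimePow).pow two_ne_zero) rfl
  · simpa using
      isKirkmanReplication_three_mul_card_of_comap_fst hasKirkmanFrame_comap_fst_nine_three
  · exact h10.three_mul_add_one
  · exact isKirkmanReplication_thirty_four
  · exact hprime (by norm_num) rfl
  · exact h4.three_mul_add_one.three_mul_add_one
  · exact hprime (by norm_num) rfl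
  · simpa using isKirkmanReplication_nine_mul_card_of_comap_fst h5

theorem exists_coprime_six_between {u : ℕ} (hu : 68 ≤ u) :
    ∃ n : ℕ, n.Coprime 6 ∧ 4 * n ≤ u ∧ u ≤ 5 * n := by
  obtain ⟨n, hn, hle, hge⟩ : ∃ n, (n % 6 = 1 ∨ n % 6 = 5) ∧ 4 * n ≤ u ∧ u ≤ 5 * n := by
    by_cases h : u / 4 % 6 = 5 ∨ u / 4 % 6 = 0
    · exact ⟨u / 4 - (u / 4 + 1) % 6, by omega⟩
    · exact ⟨u / 4 - (u / 4 % 6 - 1), by omega⟩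
  refine ⟨n, ?_, hle, hge⟩
  rw [Nat.coprime_iff_gcd_eq_one, Nat.gcd_comm, Nat.gcd_rec]
  obtain h | h := hn <;> simp [h]

theorem exists_transversal_parameters {u : ℕ} (hu : 16 ≤ u) (h26 : u ≠ 26) (h27 : u ≠ 27) :
    ∃ n, (n.Coprime 6 ∨ IsPrimePow n ∧ 4 ≤ n) ∧ 4 * n ≤ u ∧ u ≤ 5 * n := by
  obtain h | h := le_or_gt 68 u
  · obtain ⟨n, hn, hle⟩ := exists_coprime_six_between h
    exact ⟨n, .inl hn, hle⟩
  have hprime {n : ℕ} (hn : n.Prime) (h4 : 4 ≤ n) : n.Coprime 6 ∨ IsPrimePow n ∧ 4 ≤ n :=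
    .inr ⟨hn.isPrimePow, h4⟩
  have h2 (k : ℕ) (hk : 2 ≤ k) : IsPrimePow (2 ^ k) ∧ 4 ≤ 2 ^ k :=
    ⟨Nat.prime_two.isPrimePow.pow (by omega), Nat.pow_le_pow_right two_pos hk⟩
  obtain h | h | h | h | h | h | h : u ≤ 20 ∨ 20 ≤ u ∧ u ≤ 25 ∨ 28 ≤ u ∧ u ≤ 35 ∨
      36 ≤ u ∧ u ≤ 45 ∨ 44 ≤ u ∧ u ≤ 55 ∨ 52 ≤ u ∧ u ≤ 65 ∨ 64 ≤ u := by omega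
  · exact ⟨4, .inr (h2 2 le_rfl), by omega⟩
  · exact ⟨5, hprime (by norm_num) (by simp), by omega⟩
  · exact ⟨7, hprime (by norm_num) (by simp), by omega⟩
  · exact ⟨9, .inr ⟨Nat.prime_three.isPrimePow.pow two_ne_zero, by simp⟩, by omega⟩
  · exact ⟨11, hprime (by norm_num) (by simp), by omega⟩
  · exact ⟨13, hprime (by norm_num) (by simp), by omega⟩
  · exact ⟨16, .inr (h2 4 (by simp)), by omega⟩

theorem isKirkmanReplication_three_mul_add_one (u : ℕ) : IsKirkmanReplication (3 * u + 1) := by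
  induction u using Nat.strong_induction_on with
  | h u ih =>
    obtain hu | hu := lt_or_ge u 16
    · exact isKirkmanReplication_of_lt_sixteen hu
    obtain rfl | h26 := eq_or_ne u 26
    · exact isKirkmanReplication_of_isPrimePow (Nat.Prime.isPrimePow (by norm_num)) rfl
    obtain rfl | h27 := eq_or_ne u 27
    · simpa using
        isKirkmanReplication_nine_mul_card_of_comap_fst hasKirkmanFrame_comap_fst_nine_three
    obtain ⟨n, hn, hle, hge⟩ := exists_transversal_parameters hu h26 h27
    obtain ⟨t, rfl⟩ := Nat.exists_eq_add_of_le hle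
    have ht : t ≤ n := by omega
    have ihn := ih n (by omega)
    have iht := ih t (by omega)
    obtain hn | ⟨hn, h4⟩ := hn
    · exact .of_coprime_six hn ht ihn iht
    · exact .of_isPrimePow hn h4 ht ihn iht

end TransversalDesigns

/-! ### Parallel classes of a Kirkman triple system -/

section ParallelClasses

universe u

/-- The parallel class labelled `x` of the Kirkman triple system obtained from a replication number:
the triples `C x` together with `{∞, (x, 0), (x, 1)}`, where the point `∞` is `none`. -/
def completeClass {X : Type*} [DecidableEq X] (C : X → X × Bool → X × Bool) (x : X) :
    Option (X × Bool) → Option (X × Bool)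
  | none => some (x, false)
  | some p => if x = p.1 then (if p.2 then none else some (x, true)) else some (C x p)

section completeClass

variable {X : Type*} [DecidableEq X] {C : X → X × Bool → X × Bool}

theorem completeClass_none (x : X) : completeClass C x none = some (x, false) := rfl

theorem completeClass_some_self (x : X) (b : Bool) :
    completeClass C x (some (x, b)) = if b then none else some (x, true) :=
  if_pos rfl

theorem completeClass_some_of_ne {x : X} {p : X × Bool} (h : x ≠ p.1) :
    completeClass C x (some p) = some (C x p) :=
  if_neg h

theorem IsKirkmanFrame.isKirkmanTripleSystem_completeClass [Finite X]
    (hC : IsKirkmanFrame (⊤ : SimpleGraph X) C) : IsKirkmanTripleSystem (completeClass C) where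
  cube_apply x p := by
    obtain _ | ⟨y, b⟩ := p
    · simp [completeClass_none, completeClass_some_self]
    obtain rfl | hxy := eq_or_ne x y
    · cases b <;> simp [completeClass_none, completeClass_some_self]
    · have h₁ := hC.adj_apply (p := (y, b)) hxy
      have h₂ := hC.adj_apply h₁
      rw [completeClass_some_of_ne (p := (y, b)) hxy, completeClass_some_of_ne h₁,
        completeClass_some_of_ne h₂, hC.cube_apply]
  apply_ne x p := by
    obtain _ | ⟨y, b⟩ := p
    · simp [completeClass_none]
    obtain rfl | hxy := eq_or_ne x y
    · cases b <;> simp [completeClass_some_self]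
    · rw [completeClass_some_of_ne (p := (y, b)) hxy, (Option.some_injective _).ne_iff, Ne,
        hC.apply_eq_self_iff]
      exact not_not.2 hxy
  exists_links p q hpq := by
    obtain _ | ⟨x, b⟩ := p <;> obtain _ | ⟨y, b'⟩ := q
    · exact (hpq rfl).elim
    · exact ⟨y, by cases b' <;> simp [Links, completeClass_none, completeClass_some_self]⟩
    · exact ⟨x, by cases b <;> simp [Links, completeClass_none, completeClass_some_self]⟩
    obtain rfl | hxy := eq_or_ne x y
    · exact ⟨x, by cases b <;> cases b' <;> simp_all [Links, completeClass_some_self]⟩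
    have hlift {z : X} {p q : X × Bool} (hpq : p.1 ≠ q.1) (h : C z p = q) :
        completeClass C z (some p) = some q := by
      rw [completeClass_some_of_ne, h]
      intro hz
      refine hpq (congrArg Prod.fst (.trans ?_ h))
      exact (hC.apply_eq_self_iff.2 (by simp [hz])).symm
    obtain ⟨z, hz⟩ := hC.exists_links (p := (x, b)) (q := (y, b')) hxy
    exact ⟨z, hz.imp (hlift hxy) (hlift hxy.symm)⟩
  card_eq := by simp [mul_comm]

end completeClass

theorem IsKirkmanTripleSystem.exists_perm {ι V : Type*} {D : ι → V → V}
    (hD : IsKirkmanTripleSystem D) (a : ι) :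
    ∃ f : Equiv.Perm V, ⇑f = D a ∧ AllCyclesOfLength f 3 := by
  let f : Equiv.Perm V := ⟨D a, D a ∘ D a, hD.cube_apply a, hD.cube_apply a⟩
  have : Fact (Nat.Prime 3) := ⟨Nat.prime_three⟩
  exact ⟨f, rfl, fun x => Function.minimalPeriod_eq_prime (hD.cube_apply a x) (hD.apply_ne a x)⟩

theorem IsKirkmanTripleSystem.exists_coordinates {ι : Type*} {V : Type u} {D : ι → V → V}
    (hD : IsKirkmanTripleSystem D) (a₀ : ι) :
    ∃ (O : Type u) (_ : V ≃ O × ZMod 3) (C : {a // a ≠ a₀} → Equiv.Perm (O × ZMod 3)),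
      (∀ a, AllCyclesOfLength (C a) 3) ∧ ∀ w w', w.1 ≠ w'.1 → ∃ a, Links (C a) w w' := by
  choose f hf hcycles using hD.exists_perm
  obtain ⟨O, e, he⟩ := (hcycles a₀).exists_orbit_coordinates
  refine ⟨O, e, fun a => e.permCongr (f a), fun a => (hcycles a).permCongr e, fun w w' hw => ?_⟩
  obtain ⟨a, ha⟩ := hD.exists_links (e.symm w) (e.symm w') fun h => hw (by rw [e.symm.injective h])
  rw [← hf] at ha
  have ha₀ : a ≠ a₀ := by
    rintro rfl
    obtain h | h := ha
    · simpa [he, hw] using congrArg (fun v => (e v).1) h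
    · simpa [he, hw.symm] using congrArg (fun v => (e v).1) h
  exact ⟨⟨a, ha₀⟩, ha.imp e.eq_symm_apply.1 e.eq_symm_apply.1⟩

/-- The groups of the design are the triples of one parallel class of a Kirkman triple system. -/
theorem exists_threeCycle_classes (u : ℕ) :
    ∃ (O : Type) (C : Fin (3 * u) → Equiv.Perm (O × ZMod 3)), Nat.card O = 2 * u + 1 ∧
      (∀ a, AllCyclesOfLength (C a) 3) ∧ ∀ w w', w.1 ≠ w'.1 → ∃ a, Links (C a) w w' := by
  obtain ⟨D, hD⟩ := isKirkmanReplication_three_mul_add_one u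
  obtain ⟨O, e, C, hC, hlinks⟩ := hD.isKirkmanTripleSystem_completeClass.exists_coordinates 0
  refine ⟨O, fun a => C (finSuccAboveEquiv 0 a), ?_, fun a => hC _, fun w w' hw => ?_⟩
  · have hcard := Nat.card_congr e
    simp only [Finite.card_option, Nat.card_prod, Nat.card_fin, Nat.card_zmod,
      Nat.card_eq_fintype_card (α := Bool), Fintype.card_bool] at hcard
    omega
  · obtain ⟨a, ha⟩ := hlinks w w' hw
    exact ⟨(finSuccAboveEquiv 0).symm a, by simpa using ha⟩

end ParallelClasses

/-! ### Assembling the factors -/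

/-- The encoding of a solution of the Hamilton–Waterloo problem that suits the assembly: the two
kinds of factors are indexed by the summands of `I₁ ⊕ I₂`, and every arc is merely required to be
covered, since a count turns this into being covered exactly once. -/
structure IsHWPFactorization {I₁ I₂ V : Type*} (σ : I₁ ⊕ I₂ → Equiv.Perm V) (m n : ℕ) : Prop where
  inl : ∀ i, AllCyclesOfLength (σ (.inl i)) m
  inr : ∀ i, AllCyclesOfLength (σ (.inr i)) n
  exists_apply_eq : ∀ x y, x ≠ y → ∃ i, σ i x = y

theorem HWPStarSolution.exists_isHWPFactorization {v m n r s : ℕ}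
    (h : HWPStarSolution v m n r s) :
    ∃ σ : Fin r ⊕ Fin s → Equiv.Perm (Fin v), IsHWPFactorization σ m n := by
  obtain ⟨σ, hm, hn, hσ⟩ := h
  refine ⟨σ ∘ finSumFinEquiv, fun i => hm _ (by simp), fun i => hn _ (by simp), fun x y hxy => ?_⟩
  obtain ⟨i, hi, -⟩ := hσ x y hxy
  exact ⟨finSumFinEquiv.symm i, by simpa using hi⟩

theorem AllCyclesOfLength.apply_ne {V : Type*} {f : Equiv.Perm V} {m : ℕ}
    (hf : AllCyclesOfLength f m) (hm : m ≠ 1) (x : V) : f x ≠ x := fun h =>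
  hm (by rw [← hf x, Function.minimalPeriod_eq_one_iff_isFixedPt.2 h])

namespace IsHWPFactorization

variable {I₁ I₂ V : Type*} {σ : I₁ ⊕ I₂ → Equiv.Perm V} {m n : ℕ}

theorem permCongr (hσ : IsHWPFactorization σ m n) {U : Type*} (e : V ≃ U) :
    IsHWPFactorization (fun i => e.permCongr (σ i)) m n where
  inl i := (hσ.inl i).permCongr e
  inr i := (hσ.inr i).permCongr e
  exists_apply_eq x y hxy := by
    obtain ⟨i, hi⟩ := hσ.exists_apply_eq _ _ (e.symm.injective.ne hxy)
    exact ⟨i, by simp [hi]⟩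

theorem apply_ne (hσ : IsHWPFactorization σ m n) (hm : m ≠ 1) (hn : n ≠ 1) :
    ∀ i x, σ i x ≠ x
  | .inl i => (hσ.inl i).apply_ne hm
  | .inr i => (hσ.inr i).apply_ne hn

theorem apply_injective [Finite V] [Finite I₁] [Finite I₂] (hσ : IsHWPFactorization σ m n)
    (hm : m ≠ 1) (hn : n ≠ 1) (hcard : Nat.card I₁ + Nat.card I₂ = Nat.card V - 1) (x : V) :
    Function.Injective fun i => σ i x := by
  let g (i : I₁ ⊕ I₂) : {y // y ≠ x} := ⟨σ i x, hσ.apply_ne hm hn i x⟩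
  have hg : g.Surjective := fun y =>
    (hσ.exists_apply_eq x y y.2.symm).imp fun _ => Subtype.ext
  have hle : Nat.card (I₁ ⊕ I₂) ≤ Nat.card {y // y ≠ x} := by
    rw [Nat.card_sum, hcard, ← Set.ncard_singleton x, ← Set.ncard_compl]
    rfl
  exact Subtype.val_injective.comp (hg.bijective_of_nat_card_le hle).1

theorem hwpStarSolution [Finite V] [Finite I₁] [Finite I₂] (hσ : IsHWPFactorization σ m n)
    (hm : m ≠ 1) (hn : n ≠ 1) (hcard : Nat.card I₁ + Nat.card I₂ = Nat.card V - 1) :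
    HWPStarSolution (Nat.card V) m n (Nat.card I₁) (Nat.card I₂) := by
  let E : Fin (Nat.card I₁ + Nat.card I₂) ≃ I₁ ⊕ I₂ :=
    finSumFinEquiv.symm.trans
      (Equiv.sumCongr (Finite.equivFin I₁).symm (Finite.equivFin I₂).symm)
  have hσ' := hσ.permCongr (Finite.equivFin V)
  have hinj := hσ'.apply_injective hm hn (by rwa [Nat.card_fin])
  refine ⟨fun i => (Finite.equivFin V).permCongr (σ (E i)), fun i hi => ?_, fun i hi => ?_,
    fun x y hxy => ?_⟩
  · change AllCyclesOfLength _ m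
    obtain ⟨j, rfl⟩ : ∃ j, i = Fin.castAdd _ j := ⟨⟨i, hi⟩, rfl⟩
    simpa [E] using hσ'.inl ((Finite.equivFin I₁).symm j)
  · change AllCyclesOfLength _ n
    obtain ⟨j, rfl⟩ : ∃ j, i = Fin.natAdd _ j := by
      obtain ⟨j, hj⟩ := Nat.exists_eq_add_of_le hi
      exact ⟨⟨j, by lia⟩, Fin.ext hj⟩
    simpa [E] using hσ'.inr ((Finite.equivFin I₂).symm j)
  · obtain ⟨i, hi⟩ := hσ'.exists_apply_eq x y hxy
    refine ⟨E.symm i, by simpa using hi, fun j hj => ?_⟩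
    exact E.eq_symm_apply.2 (hinj x (hj.trans hi.symm))

end IsHWPFactorization

theorem exists_isHWPFactorization_of_blowup {A B O L K I₁ I₂ : Type*} {m n : ℕ}
    {C : A ⊕ B → Equiv.Perm (O × L)} (hC : ∀ w w', w.1 ≠ w'.1 → ∃ a, Links (C a) w w')
    (hA : ∀ a, BlowupFactorizable (C (.inl a)) K m) (hB : ∀ b, BlowupFactorizable (C (.inr b)) K n)
    {τ : I₁ ⊕ I₂ → Equiv.Perm (L × K)} (hτ : IsHWPFactorization τ m n) :
    ∃ σ : (A × Bool × K ⊕ I₁) ⊕ (B × Bool × K ⊕ I₂) → Equiv.Perm (O × L × K),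
      IsHWPFactorization σ m n := by
  choose f hf hflinks using hA
  choose g hg hglinks using hB
  refine ⟨Sum.elim
    (Sum.elim (fun a => (Equiv.prodAssoc O L K).permCongr (f a.1 a.2))
      fun i => Equiv.prodCongr (Equiv.refl O) (τ (.inl i)))
    (Sum.elim (fun b => (Equiv.prodAssoc O L K).permCongr (g b.1 b.2))
      fun i => Equiv.prodCongr (Equiv.refl O) (τ (.inr i))), ?_, ?_, ?_⟩
  · rintro (a | i)
    · exact (hf a.1 a.2).permCongr _
    · exact (hτ.inl i).prodCongr_refl
  · rintro (b | i)
    · exact (hg b.1 b.2).permCongr _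
    · exact (hτ.inr i).prodCongr_refl
  · rintro ⟨o, l, k⟩ ⟨o', l', k'⟩ hne
    obtain rfl | ho := eq_or_ne o o'
    · obtain ⟨i | i, hi⟩ := hτ.exists_apply_eq (l, k) (l', k') (by simpa using hne)
      · exact ⟨.inl (.inr i), by simp [hi]⟩
      · exact ⟨.inr (.inr i), by simp [hi]⟩
    · obtain ⟨a | b, h⟩ := hC (o, l) (o', l') ho
      · obtain ⟨j, hj⟩ := hflinks a _ _ h k k'
        exact ⟨.inl (.inl (a, j)), by simp [hj]⟩
      · obtain ⟨j, hj⟩ := hglinks b _ _ h k k'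
        exact ⟨.inr (.inl (b, j)), by simp [hj]⟩

theorem AllCyclesOfLength.blowupFactorizable_of_dvd {W : Type*} {c : Equiv.Perm W} {k m : ℕ}
    (hc : AllCyclesOfLength c 3) (hk : Odd k) (hm : 3 ≤ m) (hmk : m ∣ 3 * k) :
    BlowupFactorizable c (ZMod k) m := by
  by_cases h3 : 3 ∣ m
  · obtain ⟨g, rfl⟩ := h3
    exact hc.blowupFactorizable_zmod (by decide) le_rfl hk
      (Nat.dvd_of_mul_dvd_mul_left three_pos hmk)
  · have h3m : Nat.Coprime m 3 := ((Nat.Prime.coprime_iff_not_dvd Nat.prime_three).2 h3).symm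
    obtain ⟨q, rfl⟩ := h3m.dvd_of_dvd_mul_left hmk
    obtain ⟨hmo, hqo⟩ := Nat.odd_mul.1 hk
    have : NeZero m := ⟨by lia⟩
    have : NeZero q := ⟨hqo.pos.ne'⟩
    have h := blowupFactorizable_addRight_one_zmod_three hm
      (hmo.coprime_two_right.mul_right h3m : m.Coprime (2 * 3))
    exact ((hc.blowupFactorizable_of_addRight_one h).prod_zmod hmo hm hqo).of_equiv
      (Fintype.equivOfCardEq (by simp [ZMod.card]))

theorem exists_split_of_add_eq {a b N r s : ℕ} (ha : 0 < a) (hab : a ≤ b + 1)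
    (h : r + s = a * N + b) :
    ∃ A B r' s', A + B = N ∧ r' + s' = b ∧ r = a * A + r' ∧ s = a * B + s' := by
  obtain hr | hr := le_total (r / a) N
  · obtain ⟨B, rfl⟩ := Nat.exists_eq_add_of_le hr
    have hdiv := Nat.div_add_mod r a
    have hlt := Nat.mod_lt r ha
    exact ⟨r / a, B, r % a, b - r % a, rfl, by lia, hdiv.symm, by lia⟩
  · have hle : a * N ≤ r := (Nat.mul_le_mul_left a hr).trans (Nat.mul_div_le r a)
    exact ⟨N, 0, r - a * N, s, by lia, by lia, by lia, by lia⟩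

theorem hwpStar_odd_construction_general {m n H : ℕ} (hm : 3 ≤ m) (hn : 3 ≤ n) (hmH : m ∣ H)
    (hnH : n ∣ H) (hH : Odd H) (h3 : 3 ∣ H)
    (h : ∀ r' s', r' + s' = H - 1 → HWPStarSolution H m n r' s')
    {x r s : ℕ} (hx : Odd x) (hrs : r + s = H * x - 1) : HWPStarSolution (H * x) m n r s := by
  obtain ⟨k, rfl⟩ := h3
  obtain ⟨u, rfl⟩ := hx
  have hk : Odd k := (Nat.odd_mul.1 hH).2
  have hkpos : 0 < k := hk.pos
  have : NeZero k := ⟨hkpos.ne'⟩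
  have hsplit : r + s = 2 * k * (3 * u) + (3 * k - 1) := by lia
  obtain ⟨A, B, r', s', hAB, hrs', rfl, rfl⟩ := exists_split_of_add_eq (by lia) (by lia) hsplit
  obtain ⟨O, C, hO, hC, hlinks⟩ := exists_threeCycle_classes u
  have : Finite O := Nat.finite_of_card_ne_zero (by lia)
  let e : Fin A ⊕ Fin B ≃ Fin (3 * u) := finSumFinEquiv.trans (finCongr hAB)
  let E : Fin (3 * k) ≃ ZMod 3 × ZMod k := Fintype.equivOfCardEq (by simp [ZMod.card])
  obtain ⟨τ, hτ⟩ := (h r' s' hrs').exists_isHWPFactorization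
  obtain ⟨σ, hσ⟩ := exists_isHWPFactorization_of_blowup (C := C ∘ e)
    (fun w w' hw => e.surjective.exists.1 (hlinks w w' hw))
    (fun a => (hC _).blowupFactorizable_of_dvd hk hm hmH)
    (fun b => (hC _).blowupFactorizable_of_dvd hk hn hnH) (hτ.permCongr E)
  convert hσ.hwpStarSolution (by lia) (by lia) (by simp [hO]; lia) using 1 <;> simp [hO] <;> ring

/-- Lemma 4.1 (main odd construction): for odd m, n ≥ 3 with h = lcm(m, n)
divisible by 3, if HWP*(h; m^r', n^s') is solvable for all r' + s' = h - 1,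
then HWP*(hx; m^r, n^s) is solvable for all odd x ≥ 1 and all r + s = hx - 1. -/
theorem hwpStar_odd_construction (m n : ℕ) (hm : 3 ≤ m) (hn : 3 ≤ n)
    (hmo : Odd m) (hno : Odd n) (h3 : 3 ∣ Nat.lcm m n)
    (h : ∀ r' s' : ℕ, r' + s' = Nat.lcm m n - 1 →
      HWPStarSolution (Nat.lcm m n) m n r' s') :
    ∀ x r s : ℕ, 0 < x → Odd x → r + s = Nat.lcm m n * x - 1 →
      HWPStarSolution (Nat.lcm m n * x) m n r s := by
  have hodd : Odd (Nat.lcm m n) := Odd.of_dvd_nat (hmo.mul hno) (Nat.lcm_dvd_mul m n)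
  exact fun _ _ _ _ hx hrs => hwpStar_odd_construction_general hm hn (Nat.dvd_lcm_left m n)
    (Nat.dvd_lcm_right m n) hodd h3 h hx hrs
end
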